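/- Let n be a positive even integer, z ∈ I^FPF_n, and m ∈ ℕ. Then, in ℤ[β][x_1,…,x_{n+2m}], 𝔊^Sp_{(21)^m × z} = Σ_{w ∈ B_fpf(z)} β^{ℓ(w) − ℓ_fpf(z)} 𝔊_{1^{2m} × w}. -/

import Mathlib

open MvPolynomial

noncomputable section

/-- The coefficient ring `ℤ[β]`. -/
abbrev Rb : Type := Polynomial ℤ

/-- The indeterminate `β`. -/
def bb : Rb := Polynomial.X

/-- The order-reversing permutation `n⋯321`, i.e. `i ↦ n+1-i` in 1-indexed notation. -/
def revPerm (n : ℕ) : Equiv.Perm (Fin n) :=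
  ⟨Fin.rev, Fin.rev, fun i => Fin.rev_rev i, fun i => Fin.rev_rev i⟩

/-- `z` is a fixed-point-free involution. -/
def IsFPF {n : ℕ} (z : Equiv.Perm (Fin n)) : Prop :=
  z * z = 1 ∧ ∀ i, z i ≠ i

/-- `x_i + x_j + β x_i x_j`. -/
def oplus {n : ℕ} (i j : Fin n) : MvPolynomial (Fin n) Rb :=
  X i + X j + C bb * (X i * X j)

/-- `IsDivDiffB i j f g` encodes `∂_i^{(β)} f = g` where `j = i+1`:
`∂_i^{(β)} f = ((1+βx_j) f - s_i((1+βx_j) f)) / (x_i - x_j)`, stated multiplicatively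
(the quotient is exact, and `g` is uniquely determined since the ring is a domain). -/
def IsDivDiffB {n : ℕ} (i j : Fin n) (f g : MvPolynomial (Fin n) Rb) : Prop :=
  (X i - X j) * g =
    (1 + C bb * X j) * f - rename ⇑(Equiv.swap i j) ((1 + C bb * X j) * f)

/-- `∏_{1 ≤ i < j ≤ n-i} (x_i + x_j + β x_i x_j)` (variables 0-indexed). -/
def spTop (n : ℕ) : MvPolynomial (Fin n) Rb :=
  ∏ p ∈ Finset.univ.filter
      (fun p : Fin n × Fin n => p.1 < p.2 ∧ (p.1 : ℕ) + (p.2 : ℕ) + 2 ≤ n),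
    oplus p.1 p.2

/-- `x_1^{n-1} x_2^{n-2} ⋯ x_{n-1}^1` (variables 0-indexed). -/
def grTop (n : ℕ) : MvPolynomial (Fin n) Rb :=
  ∏ a : Fin n, X a ^ (n - 1 - (a : ℕ))

/-- The defining property of the family of symplectic Grothendieck polynomials. -/
def IsSpFam (n : ℕ) (G : Equiv.Perm (Fin n) → MvPolynomial (Fin n) Rb) : Prop :=
  G (revPerm n) = spTop n ∧
    ∀ z : Equiv.Perm (Fin n), IsFPF z →
      ∀ i j : Fin n, (j : ℕ) = (i : ℕ) + 1 →
        z i ≠ j → z j ≠ i → z j < z i →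
          IsDivDiffB i j (G z) (G (Equiv.swap i j * z * Equiv.swap i j))

/-- The defining property of the family of Grothendieck polynomials. -/
def IsGrothFam (n : ℕ) (G : Equiv.Perm (Fin n) → MvPolynomial (Fin n) Rb) : Prop :=
  G (revPerm n) = grTop n ∧
    ∀ (w : Equiv.Perm (Fin n)) (i j : Fin n), (j : ℕ) = (i : ℕ) + 1 →
      w j < w i → IsDivDiffB i j (G w) (G (w * Equiv.swap i j))

/-- The length (number of inversions) of a permutation. -/
def invLen {n : ℕ} (w : Equiv.Perm (Fin n)) : ℕ :=
  (Finset.univ.filter (fun p : Fin n × Fin n => p.1 < p.2 ∧ w p.2 < w p.1)).card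

/-- The fixed-point-free involution length `ℓ_fpf(z) = #{(i,j) : z(i) > z(j) < i < j}`. -/
def fpfLen {n : ℕ} (z : Equiv.Perm (Fin n)) : ℕ :=
  (Finset.univ.filter
      (fun p : Fin n × Fin n => z p.2 < z p.1 ∧ z p.2 < p.1 ∧ p.1 < p.2)).card

/-- The underlying function of `Θ = (1,2)(3,4)⋯(n-1,n)`. -/
def thetaFun (n : ℕ) (hn : n % 2 = 0) (i : Fin n) : Fin n :=
  ⟨if (i : ℕ) % 2 = 0 then (i : ℕ) + 1 else (i : ℕ) - 1, by
    have hi := i.isLt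
    split_ifs with h <;> omega⟩

/-- The fixed-point-free involution `Θ = (1,2)(3,4)⋯(n-1,n)`. -/
def theta (n : ℕ) (hn : n % 2 = 0) : Equiv.Perm (Fin n) :=
  Function.Involutive.toPerm (thetaFun n hn) (by
    intro i
    have hi := i.isLt
    apply Fin.ext
    simp only [thetaFun]
    split_ifs <;> omega)

/-- One step of the partial Hecke action: `heckeStep a z = some (z · s_{a+1})` when defined,
with `a` a 0-indexed letter (so `a` corresponds to the simple transposition of `a+1, a+2`
in 1-indexed notation). -/
def heckeStep {n : ℕ} (a : ℕ) (z : Equiv.Perm (Fin n)) : Option (Equiv.Perm (Fin n)) :=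
  if h : a + 1 < n then
    let i : Fin n := ⟨a, Nat.lt_of_succ_lt h⟩
    let j : Fin n := ⟨a + 1, h⟩
    if z i < z j then some (Equiv.swap i j * z * Equiv.swap i j)
    else if z i = j ∧ z j = i then none
    else if z i ≠ j ∧ z j ≠ i ∧ z j < z i then some z
    else none
  else none

/-- Apply a word of (0-indexed) letters to `z` via the partial Hecke action. -/
def heckeApply {n : ℕ} (l : List ℕ) (z : Equiv.Perm (Fin n)) :
    Option (Equiv.Perm (Fin n)) :=
  l.foldl (fun o a => o.bind (heckeStep a)) (some z)

/-- The simple transposition corresponding to the 0-indexed letter `a`. -/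
def swapAt (n : ℕ) (a : ℕ) : Equiv.Perm (Fin n) :=
  if h : a + 1 < n then Equiv.swap ⟨a, Nat.lt_of_succ_lt h⟩ ⟨a + 1, h⟩ else 1

/-- The permutation `s_{i_1} s_{i_2} ⋯ s_{i_l}` of a word. -/
def wordToPerm (n : ℕ) (l : List ℕ) : Equiv.Perm (Fin n) := (l.map (swapAt n)).prod

/-- `l` is a reduced word for `w`. -/
def IsReducedWord (n : ℕ) (w : Equiv.Perm (Fin n)) (l : List ℕ) : Prop :=
  (∀ a ∈ l, a + 1 < n) ∧ wordToPerm n l = w ∧ l.length = invLen w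

/-- The set of Hecke atoms `B_fpf(z)`. -/
def Bfpf (n : ℕ) (hn : n % 2 = 0) (z : Equiv.Perm (Fin n)) :
    Finset (Equiv.Perm (Fin n)) :=
  @Finset.filter _
    (fun w => ∃ l : List ℕ, IsReducedWord n w l ∧ heckeApply l (theta n hn) = some z)
    (Classical.decPred _) Finset.univ

/-- `extPerm z w` is the permutation `z × w` acting on the first `m` letters by `z`
and the last `n` letters by `w`. -/
def extPerm {m n : ℕ} (z : Equiv.Perm (Fin m)) (w : Equiv.Perm (Fin n)) :
    Equiv.Perm (Fin (m + n)) :=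
  finSumFinEquiv.symm.trans ((Equiv.sumCongr z w).trans finSumFinEquiv)

/-- `rank(z_{[i][j]}) = #{k ∈ [j] : z(k) ≤ i}` (1-indexed sizes `i, j`). -/
def permRank {n : ℕ} (z : Equiv.Perm (Fin n)) (i j : ℕ) : ℕ :=
  (Finset.univ.filter (fun k : Fin n => (k : ℕ) < j ∧ ((z k : Fin n) : ℕ) < i)).card

/-- The rank of the upper-left `i × j` corner of `A` (1-indexed sizes `i, j ≤ n`). -/
def cornerRank {n : ℕ} (A : Matrix (Fin n) (Fin n) ℂ) (i j : ℕ) : ℕ :=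
  Matrix.rank (Matrix.of fun (a : Fin (min i n)) (b : Fin (min j n)) =>
    A ⟨(a : ℕ), lt_of_lt_of_le a.isLt (min_le_right i n)⟩
      ⟨(b : ℕ), lt_of_lt_of_le b.isLt (min_le_right j n)⟩)

/-- The orthogonal Rothe diagram `D^O(z) = {(i, z(j)) : z(i) > z(j) ≤ i < j}` (0-indexed). -/
def DO (n : ℕ) (z : Equiv.Perm (Fin n)) : Finset (Fin n × Fin n) :=
  Finset.image (fun p : Fin n × Fin n => (p.1, z p.2))
    (Finset.univ.filter (fun p : Fin n × Fin n => z p.2 < z p.1 ∧ z p.2 ≤ p.1 ∧ p.1 < p.2))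

/-- The symplectic Rothe diagram `D^Sp(z) = {(i, z(j)) : z(i) > z(j) < i < j}` (0-indexed). -/
def DSp (n : ℕ) (z : Equiv.Perm (Fin n)) : Finset (Fin n × Fin n) :=
  Finset.image (fun p : Fin n × Fin n => (p.1, z p.2))
    (Finset.univ.filter (fun p : Fin n × Fin n => z p.2 < z p.1 ∧ z p.2 < p.1 ∧ p.1 < p.2))

/-- The essential set `Ess(D) = {(i,j) ∈ D : (i,j+1) ∉ D and (i+1,j) ∉ D}`. -/
def Ess {n : ℕ} (D : Finset (Fin n × Fin n)) : Finset (Fin n × Fin n) :=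
  D.filter (fun p =>
    (∀ q ∈ D, ¬(q.1 = p.1 ∧ (q.2 : ℕ) = (p.2 : ℕ) + 1)) ∧
    (∀ q ∈ D, ¬((q.1 : ℕ) = (p.1 : ℕ) + 1 ∧ q.2 = p.2)))

/-- A permutation is vexillary if it avoids the pattern 2143. -/
def Vexillary {n : ℕ} (z : Equiv.Perm (Fin n)) : Prop :=
  ¬ ∃ i j k l : Fin n, i < j ∧ j < k ∧ k < l ∧ z j < z i ∧ z i < z l ∧ z l < z k

/-- The ideal of `ℤ[x_1,…,x_N]` generated by symmetric polynomials with zero constant term. -/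
def ILambda (N : ℕ) : Ideal (MvPolynomial (Fin N) ℤ) :=
  Ideal.span {f : MvPolynomial (Fin N) ℤ |
    (∀ σ : Equiv.Perm (Fin N), rename (⇑σ) f = f) ∧ coeff 0 f = 0}

/-- Substitute `x_j = 0` for all `j > n`, producing a polynomial in `x_1,…,x_n`. -/
def truncVars (n N : ℕ) (f : MvPolynomial (Fin N) Rb) : MvPolynomial (Fin n) Rb :=
  aeval (fun i : Fin N => if h : (i : ℕ) < n then X ⟨(i : ℕ), h⟩ else 0) f

/-- The order used to list the elements of a pipe-dream subset `S`:
rows weakly increasing, columns strictly decreasing within a row. -/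
def rowOrder {n : ℕ} (p q : Fin n × Fin n) : Prop :=
  p.1 < q.1 ∨ (p.1 = q.1 ∧ q.2 < p.2)

/-- `δ(S)` is a symplectic Hecke word for `z` (with Hecke words computed from `Θ`);
here `L` is the listing of `S` in the order `rowOrder`, and `(a,b) ∈ S` (0-indexed)
contributes the 0-indexed letter `a + b`, i.e. the 1-indexed letter `(b+1)+(a+1)-1`. -/
def DeltaHeckeWord (n : ℕ) (hn : n % 2 = 0) (z : Equiv.Perm (Fin n))
    (S : Finset (Fin n × Fin n)) : Prop :=
  ∃ L : List (Fin n × Fin n), L.toFinset = S ∧ L.Chain' rowOrder ∧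
    heckeApply (L.map (fun p => (p.1 : ℕ) + (p.2 : ℕ))) (theta n hn) = some z

/-! Fix `n` and write `F_z` for the sum of `β^{ℓ(w) - ℓ_fpf(z)} 𝔊_w` over `w ∈ B_fpf(z)`.

If `i + 1 ≠ z(i) > z(i+1) ≠ i`, then `B_fpf(z)` consists of the permutations `u s_i` with
`u ∈ B_fpf(s_i z s_i)` and of pairs `{u, u s_i}` with `u(i) < u(i+1)`. As `∂_i^{(β)}` sends
`𝔊_{u s_i}` to `𝔊_u` and `𝔊_u` to `-β 𝔊_u`, each pair contributes `0` to `∂_i^{(β)} F_z`, so `F_z`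
satisfies the recursion `∂_i^{(β)} F_z = F_{s_i z s_i}` of `𝔊^Sp_z`. At every other `i`, both `F_z`
and `𝔊^Sp_z` are symmetric in `x_i` and `x_{i+1}`.

Let `D = 𝔊^Sp_z - F_z`. By induction on `ℓ_fpf(z)`, for every `i` either `s_i D = D` or
`∂_i^{(β)} D = 0`. The second condition reads `(1 + β x_{i+1}) D = (1 + β x_i) s_i D`, so the zero
set of `D` in `ℤ[β]^n` is stable under adjacent transpositions of coordinates. As `D` does not
involve `x_n`, this zero set is also stable under changes of the last coordinate, so that `D`
vanishes as soon as its constant term does, which is the case when `ℓ_fpf(z) > 0`. For `z = Θ` the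
difference is symmetric, hence constant, and it vanishes at `x_1 = ⋯ = x_n = -1/β`, where every
`𝔊^Sp_z` takes the value `(-1/β)^{ℓ_fpf(z)}` and every `𝔊_w` the value `(-1/β)^{ℓ(w)}`.

This proves `𝔊^Sp_z = F_z` for all `z`; the theorem is the case of `(21)^m × z`, since
`B_fpf((21)^m × z)` consists of the permutations `1^{2m} × w` with `w ∈ B_fpf(z)`. -/

/-! ### Adjacent transpositions and length -/

section Length

variable {n : ℕ} {i j : Fin n}

theorem lt_of_val_eq_add_one (hij : (j : ℕ) = i + 1) : i < j := by
  rw [Fin.lt_def]; omega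

theorem swap_lt_swap_iff_of_adjacent (hij : (j : ℕ) = i + 1) {p q : Fin n}
    (h : ¬(p = i ∧ q = j)) (h' : ¬(p = j ∧ q = i)) :
    Equiv.swap i j p < Equiv.swap i j q ↔ p < q := by
  simp only [Equiv.swap_apply_def]
  simp only [Fin.lt_def, Fin.ext_iff] at *
  split_ifs <;> omega

theorem invLen_mul_swap_of_lt (hij : (j : ℕ) = i + 1) {w : Equiv.Perm (Fin n)}
    (h : w i < w j) : invLen (w * Equiv.swap i j) = invLen w + 1 := by
  have hlt := lt_of_val_eq_add_one hij
  have inversions_mul_swap : (Finset.univ.filter (fun p : Fin n × Fin n => p.1 < p.2 ∧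
        (w * Equiv.swap i j) p.2 < (w * Equiv.swap i j) p.1)) =
      insert (i, j) ((Finset.univ.filter (fun p : Fin n × Fin n => p.1 < p.2 ∧ w p.2 < w p.1)).map
        ((Equiv.prodCongr (Equiv.swap i j) (Equiv.swap i j)).toEmbedding)) := by
    ext ⟨p, q⟩
    simp only [Finset.mem_filter, Finset.mem_univ, true_and, Finset.mem_insert,
      Finset.mem_map_equiv]
    simp only [Equiv.Perm.mul_apply, Equiv.prodCongr_symm, Equiv.symm_swap,
      Equiv.prodCongr_apply, Prod.map, Prod.mk.injEq]
    by_cases h1 : p = i ∧ q = j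
    · obtain ⟨rfl, rfl⟩ := h1
      simp [hlt, h]
    by_cases h2 : p = j ∧ q = i
    · obtain ⟨rfl, rfl⟩ := h2
      simp [hlt.not_gt, h.not_gt, hlt.ne']
    rw [swap_lt_swap_iff_of_adjacent hij h1 h2]
    simp [h1]
  rw [invLen, invLen, inversions_mul_swap, Finset.card_insert_of_notMem, Finset.card_map]
  simp [Finset.mem_map_equiv, hlt.not_gt]

theorem invLen_eq_of_gt (hij : (j : ℕ) = i + 1) {w : Equiv.Perm (Fin n)}
    (h : w j < w i) : invLen w = invLen (w * Equiv.swap i j) + 1 := by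
  have := invLen_mul_swap_of_lt hij (w := w * Equiv.swap i j) (by simpa using h)
  simpa [mul_assoc] using this

theorem invLen_one : invLen (1 : Equiv.Perm (Fin n)) = 0 := by
  rw [invLen, Finset.card_eq_zero, Finset.filter_eq_empty_iff]
  rintro p - ⟨h1, h2⟩
  exact h1.asymm h2

theorem invLen_inv (w : Equiv.Perm (Fin n)) : invLen w⁻¹ = invLen w :=
  Finset.card_bij' (fun p _ => (w⁻¹ p.2, w⁻¹ p.1)) (fun p _ => (w p.2, w p.1))
    (by simp +contextual) (by simp +contextual) (by simp) (by simp)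

theorem invLen_le_sq (w : Equiv.Perm (Fin n)) : invLen w ≤ n * n :=
  (Finset.card_le_univ _).trans (by simp)

theorem eq_one_of_forall_lt {w : Equiv.Perm (Fin n)}
    (h : ∀ i j : Fin n, (j : ℕ) = i + 1 → w i < w j) : w = 1 := by
  cases n with
  | zero => exact Subsingleton.elim _ _
  | succ n =>
    have hw : StrictMono w := Fin.strictMono_iff_lt_succ.2 fun i => h _ _ (by simp)
    have : hw.orderIsoOfSurjective _ w.surjective = OrderIso.refl _ := Subsingleton.elim _ _
    exact Equiv.ext fun x => DFunLike.congr_fun this x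

theorem eq_revPerm_of_forall_gt {w : Equiv.Perm (Fin n)}
    (h : ∀ i j : Fin n, (j : ℕ) = i + 1 → w j < w i) : w = revPerm n := by
  have hw : revPerm n * w = 1 :=
    eq_one_of_forall_lt fun i j hij => Fin.rev_lt_rev.2 (h i j hij)
  have hrev : revPerm n * revPerm n = 1 := Equiv.ext Fin.rev_rev
  rw [eq_inv_of_mul_eq_one_right hw, inv_eq_of_mul_eq_one_right hrev]

@[elab_as_elim]
theorem induction_from_one {P : Equiv.Perm (Fin n) → Prop} (one : P 1)
    (step : ∀ w (i j : Fin n), (j : ℕ) = i + 1 → w j < w i → P (w * Equiv.swap i j) → P w)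
    (w : Equiv.Perm (Fin n)) : P w := by
  induction hd : invLen w using Nat.strong_induction_on generalizing w with
  | _ d ih =>
    by_cases hasc : ∀ i j : Fin n, (j : ℕ) = i + 1 → w i < w j
    · rwa [eq_one_of_forall_lt hasc]
    push Not at hasc
    obtain ⟨i, j, hij, hle⟩ := hasc
    have h := hle.lt_of_ne (w.injective.ne (lt_of_val_eq_add_one hij).ne')
    have hlen := invLen_eq_of_gt hij h
    exact step w i j hij h (ih _ (by omega) _ rfl)

@[elab_as_elim]
theorem induction_from_revPerm {P : Equiv.Perm (Fin n) → Prop} (longest : P (revPerm n))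
    (step : ∀ w (i j : Fin n), (j : ℕ) = i + 1 → w i < w j → P (w * Equiv.swap i j) → P w)
    (w : Equiv.Perm (Fin n)) : P w := by
  induction hd : n * n - invLen w using Nat.strong_induction_on generalizing w with
  | _ d ih =>
    by_cases hdesc : ∀ i j : Fin n, (j : ℕ) = i + 1 → w j < w i
    · rwa [eq_revPerm_of_forall_gt hdesc]
    push Not at hdesc
    obtain ⟨i, j, hij, hle⟩ := hdesc
    have h := hle.lt_of_ne (w.injective.ne (lt_of_val_eq_add_one hij).ne)
    have hlen := invLen_mul_swap_of_lt hij h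
    have := invLen_le_sq (w * Equiv.swap i j)
    exact step w i j hij h (ih _ (by omega) _ rfl)

end Length

/-! ### Reduced words -/

section ReducedWords

variable {n : ℕ} {i j : Fin n}

theorem swapAt_val (hij : (j : ℕ) = i + 1) : swapAt n i = Equiv.swap i j := by
  have h : (i : ℕ) + 1 < n := hij ▸ j.isLt
  rw [swapAt, dif_pos h]
  congr
  exact hij.symm

theorem wordToPerm_concat (n : ℕ) (l : List ℕ) (a : ℕ) :
    wordToPerm n (l ++ [a]) = wordToPerm n l * swapAt n a := by
  simp [wordToPerm]

theorem invLen_mul_swap_le (hij : (j : ℕ) = i + 1) (w : Equiv.Perm (Fin n)) :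
    invLen (w * Equiv.swap i j) ≤ invLen w + 1 := by
  rcases (w.injective.ne (lt_of_val_eq_add_one hij).ne).lt_or_gt with h | h
  · exact (invLen_mul_swap_of_lt hij h).le
  · have := invLen_eq_of_gt hij h
    omega

theorem invLen_wordToPerm_le (n : ℕ) (l : List ℕ) : invLen (wordToPerm n l) ≤ l.length := by
  induction l using List.reverseRecOn with
  | nil => exact invLen_one.le
  | append_singleton l a ih =>
    rw [wordToPerm_concat, List.length_append, List.length_singleton]
    by_cases ha : a + 1 < n
    · rw [swapAt, dif_pos ha]
      exact (invLen_mul_swap_le rfl _).trans (Nat.succ_le_succ ih)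
    · rw [swapAt, dif_neg ha, mul_one]
      exact ih.trans (Nat.le_succ _)

theorem isReducedWord_concat_iff (hij : (j : ℕ) = i + 1) {w : Equiv.Perm (Fin n)} {l : List ℕ} :
    IsReducedWord n w (l ++ [(i : ℕ)]) ↔
      w j < w i ∧ IsReducedWord n (w * Equiv.swap i j) l := by
  have hi : (i : ℕ) + 1 < n := hij ▸ j.isLt
  simp only [IsReducedWord, wordToPerm_concat, swapAt_val hij, List.mem_append, List.mem_singleton,
    or_imp, forall_and, forall_eq, List.length_append, List.length_singleton,
    ← eq_mul_inv_iff_mul_eq, Equiv.swap_inv, hi, and_true]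
  constructor
  · rintro ⟨hl, hw, hlen⟩
    have hle : invLen (w * Equiv.swap i j) ≤ l.length := hw ▸ invLen_wordToPerm_le n l
    rcases (w.injective.ne (lt_of_val_eq_add_one hij).ne).lt_or_gt with h | h
    · have := invLen_mul_swap_of_lt hij h
      omega
    · have := invLen_eq_of_gt hij h
      exact ⟨h, hl, hw, by omega⟩
  · rintro ⟨h, hl, hw, hlen⟩
    exact ⟨hl, hw, by rw [hlen, invLen_eq_of_gt hij h]⟩

theorem IsReducedWord.exists_concat {w : Equiv.Perm (Fin n)} {l : List ℕ} {a : ℕ}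
    (h : IsReducedWord n w (l ++ [a])) : ∃ i j : Fin n, (j : ℕ) = i + 1 ∧ a = i ∧
      w j < w i ∧ IsReducedWord n (w * Equiv.swap i j) l := by
  have ha : a + 1 < n := h.1 a (by simp)
  exact ⟨⟨a, by omega⟩, ⟨a + 1, ha⟩, rfl, rfl, (isReducedWord_concat_iff rfl).1 h⟩

theorem isReducedWord_nil_iff {w : Equiv.Perm (Fin n)} : IsReducedWord n w [] ↔ w = 1 := by
  constructor
  · rintro ⟨-, hw, -⟩
    exact hw.symm
  · rintro rfl
    exact ⟨by simp, rfl, invLen_one.symm⟩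

theorem exists_isReducedWord (w : Equiv.Perm (Fin n)) : ∃ l, IsReducedWord n w l := by
  induction w using induction_from_one with
  | one => exact ⟨[], isReducedWord_nil_iff.2 rfl⟩
  | step w i j hij h ih =>
    obtain ⟨l, hl⟩ := ih
    exact ⟨l ++ [(i : ℕ)], (isReducedWord_concat_iff hij).2 ⟨h, hl⟩⟩

theorem swap_mul_swap_comm {i j k l : Fin n} (hik : i ≠ k) (hil : i ≠ l) (hjk : j ≠ k)
    (hjl : j ≠ l) : Equiv.swap i j * Equiv.swap k l = Equiv.swap k l * Equiv.swap i j := by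
  ext x
  simp only [Equiv.Perm.mul_apply, Equiv.swap_apply_def]
  split_ifs <;> simp_all

theorem swap_mul_swap_mul_swap_braid {a b c : Fin n} (hab : a ≠ b) (hac : a ≠ c) (hbc : b ≠ c) :
    Equiv.swap a b * Equiv.swap b c * Equiv.swap a b =
      Equiv.swap b c * Equiv.swap a b * Equiv.swap b c := by
  rw [Equiv.swap_mul_swap_mul_swap hab hac, Equiv.swap_comm a b, Equiv.swap_comm b c,
    Equiv.swap_mul_swap_mul_swap hbc.symm hac.symm, Equiv.swap_comm]

end ReducedWords

section Matsumoto

variable {n : ℕ}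

theorem exists_isReducedWord_of_two_far_descents {i j k l : Fin n} (hij : (j : ℕ) = i + 1)
    (hkl : (l : ℕ) = k + 1) (hjk : j < k) {w : Equiv.Perm (Fin n)} (hi : w j < w i)
    (hk : w l < w k) :
    ∃ u, IsReducedWord n (w * Equiv.swap i j) (u ++ [(k : ℕ)]) ∧
      IsReducedWord n (w * Equiv.swap k l) (u ++ [(i : ℕ)]) := by
  have hlt_ij := lt_of_val_eq_add_one hij
  have hlt_kl := lt_of_val_eq_add_one hkl
  have hik := hlt_ij.trans hjk
  have hjl := hjk.trans hlt_kl
  have hil := hik.trans hlt_kl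
  obtain ⟨u, hu⟩ := exists_isReducedWord (w * Equiv.swap i j * Equiv.swap k l)
  refine ⟨u, (isReducedWord_concat_iff hkl).2 ⟨?_, hu⟩, (isReducedWord_concat_iff hij).2 ⟨?_, ?_⟩⟩
  · simpa [Equiv.swap_apply_of_ne_of_ne, hik.ne', hjk.ne', hil.ne', hjl.ne'] using hk
  · simpa [Equiv.swap_apply_of_ne_of_ne, hik.ne, hjk.ne, hil.ne, hjl.ne] using hi
  · rwa [mul_assoc, ← swap_mul_swap_comm hik.ne hil.ne hjk.ne hjl.ne, ← mul_assoc]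

theorem exists_isReducedWord_of_two_consecutive_descents {a b c : Fin n}
    (hab : (b : ℕ) = a + 1) (hbc : (c : ℕ) = b + 1) {w : Equiv.Perm (Fin n)} (hba : w b < w a)
    (hcb : w c < w b) :
    ∃ u, IsReducedWord n (w * Equiv.swap a b) (u ++ [(a : ℕ)] ++ [(b : ℕ)]) ∧
      IsReducedWord n (w * Equiv.swap b c) (u ++ [(b : ℕ)] ++ [(a : ℕ)]) := by
  have hltab := lt_of_val_eq_add_one hab
  have hltbc := lt_of_val_eq_add_one hbc
  have hltac := hltab.trans hltbc
  obtain ⟨u, hu⟩ :=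
    exists_isReducedWord (w * (Equiv.swap a b * Equiv.swap b c * Equiv.swap a b))
  have swap_ab_c := Equiv.swap_apply_of_ne_of_ne hltac.ne' hltbc.ne'
  have swap_bc_a := Equiv.swap_apply_of_ne_of_ne hltab.ne hltac.ne
  refine ⟨u, ?_, ?_⟩
  · simp only [isReducedWord_concat_iff hab, isReducedWord_concat_iff hbc, Equiv.Perm.mul_apply,
      Equiv.swap_apply_left, Equiv.swap_apply_right, swap_ab_c, swap_bc_a]
    exact ⟨hcb.trans hba, hcb, by simpa only [mul_assoc] using hu⟩
  · simp only [isReducedWord_concat_iff hab, isReducedWord_concat_iff hbc, Equiv.Perm.mul_apply,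
      Equiv.swap_apply_left, Equiv.swap_apply_right, swap_ab_c, swap_bc_a]
    rw [swap_mul_swap_mul_swap_braid hltab.ne hltac.ne hltbc.ne] at hu
    exact ⟨hcb.trans hba, hba, by simpa only [mul_assoc] using hu⟩

/-- A right action `f` of the letters on the points of `S` that satisfies the braid relations of
`S_n`; no quadratic relation is imposed. -/
structure IsBraidAction {α : Type*} (n : ℕ) (f : α → ℕ → α) (S : Set α) : Prop where
  mem : ∀ x ∈ S, ∀ a, f x a ∈ S
  comm : ∀ x ∈ S, ∀ a b, a + 1 < b → b + 1 < n → f (f x a) b = f (f x b) a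
  braid : ∀ x ∈ S, ∀ a, a + 2 < n → f (f (f x a) (a + 1)) a = f (f (f x (a + 1)) a) (a + 1)

theorem IsBraidAction.foldl_mem {α : Type*} {f : α → ℕ → α} {S : Set α}
    (hf : IsBraidAction n f S) {x : α} (hx : x ∈ S) (l : List ℕ) : l.foldl f x ∈ S :=
  List.foldlRecOn l f hx fun y hy a _ => hf.mem y hy a

/-- Matsumoto's theorem. If the last letters differ, the common value is reached through
reduced words ending in the two sides of a braid relation. -/
theorem IsBraidAction.foldl_eq {α : Type*} {f : α → ℕ → α} {S : Set α}
    (hf : IsBraidAction n f S) {l l' : List ℕ} {w : Equiv.Perm (Fin n)}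
    (hl : IsReducedWord n w l) (hl' : IsReducedWord n w l') {x : α} (hx : x ∈ S) :
    l.foldl f x = l'.foldl f x := by
  induction hd : l.length generalizing l l' w with
  | zero =>
    have hlen' : l'.length = 0 := by rw [hl'.2.2, ← hl.2.2, hd]
    rw [List.length_eq_zero_iff.1 hd, List.length_eq_zero_iff.1 hlen']
  | succ d ih =>
    have hlen : l'.length = l.length := hl'.2.2.trans hl.2.2.symm
    obtain ⟨k, a, rfl⟩ := l.eq_nil_or_concat'.resolve_left (by rintro rfl; simp at hd)
    obtain ⟨k', b, rfl⟩ := l'.eq_nil_or_concat'.resolve_left (by rintro rfl; simp at hlen)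
    wlog hle : a ≤ b generalizing k k' a b
    · exact (this k' b hl' (hlen.trans hd) k a hl hlen.symm (le_of_not_ge hle)).symm
    obtain ⟨i₁, j₁, hij₁, rfl, hi₁, hk⟩ := hl.exists_concat
    obtain ⟨i₂, j₂, hij₂, rfl, hi₂, hk'⟩ := hl'.exists_concat
    simp only [List.length_append, List.length_singleton, add_left_inj]
      at hd hlen
    simp only [List.foldl_concat]
    rcases hle.eq_or_lt with heq | hlt
    · obtain rfl : i₁ = i₂ := Fin.ext heq
      obtain rfl : j₁ = j₂ := Fin.ext (hij₁.trans hij₂.symm)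
      rw [ih hk hk' hd]
    rcases (Nat.succ_le_of_lt hlt).eq_or_lt with heq | hlt
    · obtain rfl : j₁ = i₂ := Fin.ext (hij₁.trans heq)
      obtain ⟨u, hu, hu'⟩ :=
        exists_isReducedWord_of_two_consecutive_descents hij₁ hij₂ hi₁ hi₂
      rw [ih hk hu hd, ih hk' hu' (hlen.trans hd)]
      simpa only [List.foldl_concat, hij₁] using
        hf.braid _ (hf.foldl_mem hx u) i₁ (by have := j₂.isLt; omega)
    · obtain ⟨u, hu, hu'⟩ := exists_isReducedWord_of_two_far_descents hij₁ hij₂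
        (Fin.lt_def.2 (by omega)) hi₁ hi₂
      rw [ih hk hu hd, ih hk' hu' (hlen.trans hd)]
      simpa only [List.foldl_concat] using
        (hf.comm _ (hf.foldl_mem hx u) i₁ i₂ hlt (by have := j₂.isLt; omega)).symm

end Matsumoto

/-! ### Fixed-point-free involutions -/

section FixedPointFree

variable {n : ℕ} {i j : Fin n} {z : Equiv.Perm (Fin n)}

theorem IsFPF.apply_apply (hz : IsFPF z) (a : Fin n) : z (z a) = a :=
  Equiv.Perm.congr_fun hz.1 a

theorem IsFPF.inv_eq (hz : IsFPF z) : z⁻¹ = z :=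
  inv_eq_of_mul_eq_one_left hz.1

theorem IsFPF.apply_eq_comm (hz : IsFPF z) : z i = j ↔ z j = i := by
  constructor <;> (rintro rfl; exact hz.apply_apply _)

theorem swap_conj_swap_conj (i j : Fin n) (z : Equiv.Perm (Fin n)) :
    Equiv.swap i j * (Equiv.swap i j * z * Equiv.swap i j) * Equiv.swap i j = z := by
  simp [mul_assoc]

theorem IsFPF.swap_conj (hz : IsFPF z) (i j : Fin n) :
    IsFPF (Equiv.swap i j * z * Equiv.swap i j) := by
  refine ⟨?_, fun a h => hz.2 (Equiv.swap i j a) ?_⟩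
  · simp only [mul_assoc, Equiv.swap_mul_self_mul]
    rw [← mul_assoc z z, hz.1, one_mul, Equiv.swap_mul_self]
  · rwa [Equiv.Perm.mul_apply, Equiv.Perm.mul_apply, Equiv.swap_apply_eq_iff] at h

theorem IsFPF.swap_conj_apply_left (hz : IsFPF z) (h : z i ≠ j) :
    (Equiv.swap i j * z * Equiv.swap i j) i = z j := by
  simpa using Equiv.swap_apply_of_ne_of_ne (mt hz.apply_eq_comm.2 h) (hz.2 j)

theorem IsFPF.swap_conj_apply_right (hz : IsFPF z) (h : z i ≠ j) :
    (Equiv.swap i j * z * Equiv.swap i j) j = z i := by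
  simpa using Equiv.swap_apply_of_ne_of_ne (hz.2 i) h

theorem IsFPF.apply_ne_of_lt (hz : IsFPF z) (hij : (j : ℕ) = i + 1) (h : z i < z j) :
    z i ≠ j := by
  intro hi
  rw [hi, hz.apply_eq_comm.1 hi] at h
  exact h.asymm (lt_of_val_eq_add_one hij)

theorem IsFPF.invLen_swap_conj_of_lt (hz : IsFPF z) (hij : (j : ℕ) = i + 1) (h : z i < z j) :
    invLen (Equiv.swap i j * z * Equiv.swap i j) = invLen z + 2 := by
  have hswap_mul : invLen (Equiv.swap i j * z) = invLen z + 1 := by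
    rw [← invLen_inv, mul_inv_rev, Equiv.swap_inv, hz.inv_eq, invLen_mul_swap_of_lt hij h]
  rw [invLen_mul_swap_of_lt hij, hswap_mul]
  rw [Equiv.Perm.mul_apply, Equiv.Perm.mul_apply, swap_lt_swap_iff_of_adjacent hij]
  · exact h
  · exact fun hi => hz.2 i hi.1
  · exact fun hi => hz.apply_ne_of_lt hij h hi.1

theorem IsFPF.two_mul_card_lt_apply (hz : IsFPF z) :
    2 * (Finset.univ.filter (fun i : Fin n => i < z i)).card = n := by
  have hcard : (Finset.univ.filter (fun i : Fin n => i < z i)).card =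
      (Finset.univ.filter (fun i : Fin n => ¬ i < z i)).card :=
    Finset.card_bij' (fun p _ => z p) (fun p _ => z p)
      (by simp +contextual [hz.apply_apply, le_of_lt])
      (fun a => by simpa [hz.apply_apply] using fun h => lt_of_le_of_ne h (hz.2 a))
      (by simp [hz.apply_apply]) (by simp [hz.apply_apply])
  have hsum := Finset.card_filter_add_card_filter_not (s := (Finset.univ : Finset (Fin n)))
    (fun i : Fin n => i < z i)
  rw [Finset.card_univ, Fintype.card_fin] at hsum
  omega

theorem IsFPF.card_inversions_lt (hz : IsFPF z) :
    (Finset.univ.filter (fun p : Fin n × Fin n =>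
      z p.2 < z p.1 ∧ p.1 < z p.2 ∧ p.1 < p.2)).card = fpfLen z := by
  refine Finset.card_bij' (fun p _ => (z p.2, z p.1)) (fun p _ => (z p.2, z p.1)) ?_ ?_ ?_ ?_ <;>
    simp +contextual [hz.apply_apply]

theorem IsFPF.card_inversions_eq (hz : IsFPF z) :
    (Finset.univ.filter (fun p : Fin n × Fin n =>
      z p.2 < z p.1 ∧ z p.2 = p.1 ∧ p.1 < p.2)).card =
      (Finset.univ.filter (fun i : Fin n => i < z i)).card := by
  refine Finset.card_bij' (fun p _ => p.1) (fun p _ => (p, z p)) ?_ ?_ ?_ ?_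
  · rintro ⟨p, q⟩
    simp +contextual [hz.apply_eq_comm (i := q)]
  · simp +contextual [hz.apply_apply]
  · rintro ⟨p, q⟩
    simp +contextual [hz.apply_eq_comm (i := q)]
  · simp

theorem IsFPF.four_mul_fpfLen_add (hz : IsFPF z) : 4 * fpfLen z + n = 2 * invLen z := by
  have hsplit : invLen z = fpfLen z +
      (Finset.univ.filter (fun p : Fin n × Fin n =>
        z p.2 < z p.1 ∧ p.1 < z p.2 ∧ p.1 < p.2)).card +
      (Finset.univ.filter (fun p : Fin n × Fin n =>
        z p.2 < z p.1 ∧ z p.2 = p.1 ∧ p.1 < p.2)).card := by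
    simp only [invLen, fpfLen, Finset.card_filter, ← Finset.sum_add_distrib]
    refine Finset.sum_congr rfl fun p _ => ?_
    rcases lt_trichotomy (z p.2) p.1 with h | h | h
    · simp [h, h.not_gt, h.ne, and_comm]
    · simp [h, and_comm]
    · simp [h, h.not_gt, h.ne', and_comm]
  rw [hz.card_inversions_lt, hz.card_inversions_eq] at hsplit
  have := hz.two_mul_card_lt_apply
  omega

theorem IsFPF.fpfLen_swap_conj_of_lt (hz : IsFPF z) (hij : (j : ℕ) = i + 1) (h : z i < z j) :
    fpfLen (Equiv.swap i j * z * Equiv.swap i j) = fpfLen z + 1 := by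
  have hlen := hz.four_mul_fpfLen_add
  have hlen' := (hz.swap_conj i j).four_mul_fpfLen_add
  rw [hz.invLen_swap_conj_of_lt hij h] at hlen'
  omega

theorem IsFPF.fpfLen_eq_of_gt (hz : IsFPF z) (hij : (j : ℕ) = i + 1) (h : z j < z i)
    (hne : z i ≠ j) : fpfLen z = fpfLen (Equiv.swap i j * z * Equiv.swap i j) + 1 := by
  have := (hz.swap_conj i j).fpfLen_swap_conj_of_lt hij
    (by rwa [hz.swap_conj_apply_left hne, hz.swap_conj_apply_right hne])
  rwa [swap_conj_swap_conj] at this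

@[elab_as_elim]
theorem IsFPF.induction_on_longer {P : Equiv.Perm (Fin n) → Prop} (hz : IsFPF z)
    (step : ∀ z, IsFPF z → (∀ y, IsFPF y → invLen z < invLen y → P y) → P z) : P z := by
  induction hk : n * n - invLen z using Nat.strong_induction_on generalizing z with
  | _ k ih =>
    refine step z hz fun y hy hlt => ih _ ?_ hy rfl
    have := invLen_le_sq y
    omega

@[elab_as_elim]
theorem IsFPF.induction_from_revPerm {P : Equiv.Perm (Fin n) → Prop} (hz : IsFPF z)
    (longest : P (revPerm n))
    (step : ∀ z (i j : Fin n), IsFPF z → (j : ℕ) = i + 1 → z i < z j →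
      P (Equiv.swap i j * z * Equiv.swap i j) → P z) : P z := by
  refine hz.induction_on_longer fun z hz ih => ?_
  by_cases hdesc : ∀ i j : Fin n, (j : ℕ) = i + 1 → z j < z i
  · rwa [eq_revPerm_of_forall_gt hdesc]
  push Not at hdesc
  obtain ⟨i, j, hij, hle⟩ := hdesc
  have h := hle.lt_of_ne (z.injective.ne (lt_of_val_eq_add_one hij).ne)
  refine step z i j hz hij h (ih _ (hz.swap_conj i j) ?_)
  rw [hz.invLen_swap_conj_of_lt hij h]
  omega

@[elab_as_elim]
theorem IsFPF.induction_on_descents {P : Equiv.Perm (Fin n) → Prop} (hz : IsFPF z)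
    (step : ∀ z, IsFPF z → (∀ i j : Fin n, (j : ℕ) = i + 1 → z j < z i → z i ≠ j →
      P (Equiv.swap i j * z * Equiv.swap i j)) → P z) : P z := by
  induction hk : fpfLen z using Nat.strong_induction_on generalizing z with
  | _ k ih =>
    refine step z hz fun i j hij h hne => ih _ ?_ (hz.swap_conj i j) rfl
    have := hz.fpfLen_eq_of_gt hij h hne
    omega

theorem theta_val {hn : n % 2 = 0} (i : Fin n) :
    (theta n hn i : ℕ) = if (i : ℕ) % 2 = 0 then (i : ℕ) + 1 else (i : ℕ) - 1 := rfl

theorem isFPF_theta (hn : n % 2 = 0) : IsFPF (theta n hn) := by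
  refine ⟨Equiv.ext fun i => Fin.ext ?_, fun i h => ?_⟩
  · simp only [Equiv.Perm.mul_apply, theta_val, Equiv.Perm.one_apply]
    split_ifs <;> omega
  · rw [Fin.ext_iff, theta_val] at h
    split_ifs at h <;> omega

theorem fpfLen_theta (hn : n % 2 = 0) : fpfLen (theta n hn) = 0 := by
  rw [fpfLen, Finset.card_eq_zero, Finset.filter_eq_empty_iff]
  rintro ⟨p, q⟩ - ⟨h1, h2, h3⟩
  simp only [Fin.lt_def, theta_val] at h1 h2 h3
  split_ifs at h1 h2 <;> omega

theorem theta_lt_or_apply_eq (hn : n % 2 = 0) (hij : (j : ℕ) = i + 1) :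
    theta n hn i < theta n hn j ∨ theta n hn i = j := by
  rw [Fin.lt_def, Fin.ext_iff, theta_val, theta_val]
  split_ifs <;> omega

theorem IsFPF.eq_theta (hz : IsFPF z) (hn : n % 2 = 0)
    (h : ∀ i j : Fin n, (j : ℕ) = i + 1 → z i < z j ∨ z i = j) : z = theta n hn := by
  suffices ∀ (k : ℕ) (p : Fin n), (p : ℕ) = k → z p = theta n hn p from
    Equiv.ext fun p => this p p rfl
  intro k
  induction k using Nat.strong_induction_on with
  | _ k ih =>
  rintro p rfl
  have z_of_lt : ∀ q < p, z q = theta n hn q := fun q hq => ih q hq q rfl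
  rcases Nat.mod_two_eq_zero_or_one p with hp | hp
  · have le_apply : ∀ q, p ≤ q → p ≤ z q := by
      intro q hq
      by_contra! hlt
      have := congrArg Fin.val (z_of_lt _ hlt)
      rw [hz.apply_apply, theta_val] at this
      rw [Fin.le_def] at hq
      split_ifs at this <;> omega
    have hlt : p < z p := (le_apply p le_rfl).lt_of_ne (hz.2 p).symm
    obtain ⟨q, hq⟩ : ∃ q : Fin n, (z p : ℕ) = q + 1 := ⟨⟨z p - 1, by omega⟩, by simp; omega⟩
    have hpq : p ≤ q := by rw [Fin.le_def]; omega
    have hqz : z q = z p := (h q (z p) hq).resolve_left fun hlt' =>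
      (le_apply q hpq).not_gt (by rwa [hz.apply_apply] at hlt')
    rw [Fin.ext_iff, theta_val, if_pos hp, hq, z.injective hqz]
  · obtain ⟨q, hq⟩ : ∃ q : Fin n, (p : ℕ) = q + 1 := ⟨⟨p - 1, by omega⟩, by simp; omega⟩
    have hqp : z q = p := by
      rw [z_of_lt q (lt_of_val_eq_add_one hq), Fin.ext_iff, theta_val, if_pos (by omega), hq]
    rw [hz.apply_eq_comm.1 hqp, Fin.ext_iff, theta_val, if_neg (by omega)]
    omega

@[elab_as_elim]
theorem IsFPF.induction_from_theta {P : Equiv.Perm (Fin n) → Prop} (hz : IsFPF z)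
    (hn : n % 2 = 0) (theta : P (theta n hn))
    (step : ∀ z (i j : Fin n), IsFPF z → (j : ℕ) = i + 1 → z j < z i → z i ≠ j →
      P (Equiv.swap i j * z * Equiv.swap i j) → P z) : P z := by
  refine hz.induction_on_descents fun z hz ih => ?_
  by_cases hasc : ∀ i j : Fin n, (j : ℕ) = i + 1 → z i < z j ∨ z i = j
  · rwa [hz.eq_theta hn hasc]
  push Not at hasc
  obtain ⟨i, j, hij, hle, hne⟩ := hasc
  have h := hle.lt_of_ne (z.injective.ne (lt_of_val_eq_add_one hij).ne')
  exact step z i j hz hij h hne (ih i j hij h hne)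

end FixedPointFree

/-! ### The partial Hecke action -/

section HeckeStep

variable {n : ℕ} {i j k l a b c : Fin n} {y z : Equiv.Perm (Fin n)}

theorem heckeStep_val (hij : (j : ℕ) = i + 1) (z : Equiv.Perm (Fin n)) :
    heckeStep i z =
      if z i < z j then some (Equiv.swap i j * z * Equiv.swap i j)
      else if z i = j ∧ z j = i then none
      else if z i ≠ j ∧ z j ≠ i ∧ z j < z i then some z
      else none := by
  have hi : (i : ℕ) + 1 < n := hij ▸ j.isLt
  obtain rfl : j = ⟨i + 1, hi⟩ := Fin.ext hij
  rw [heckeStep, dif_pos hi]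

theorem heckeStep_of_lt (hij : (j : ℕ) = i + 1) (h : z i < z j) :
    heckeStep i z = some (Equiv.swap i j * z * Equiv.swap i j) := by
  rw [heckeStep_val hij, if_pos h]

theorem IsFPF.heckeStep_of_gt (hz : IsFPF z) (hij : (j : ℕ) = i + 1) (h : z j < z i)
    (hne : z i ≠ j) : heckeStep i z = some z := by
  simp [heckeStep_val hij, h, h.not_gt, hne, mt hz.apply_eq_comm.2 hne]

theorem IsFPF.heckeStep_of_apply_eq (hz : IsFPF z) (hij : (j : ℕ) = i + 1) (h : z i = j) :
    heckeStep i z = none := by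
  simp [heckeStep_val hij, h, hz.apply_eq_comm.1 h, (lt_of_val_eq_add_one hij).not_gt]

theorem IsFPF.heckeStep_cases (hz : IsFPF z) (hij : (j : ℕ) = i + 1) :
    heckeStep i z = none ∨ heckeStep i z = some z ∨
      heckeStep i z = some (Equiv.swap i j * z * Equiv.swap i j) := by
  rcases (z.injective.ne (lt_of_val_eq_add_one hij).ne).lt_or_gt with h | h
  · exact Or.inr (Or.inr (heckeStep_of_lt hij h))
  by_cases hne : z i = j
  · exact Or.inl (hz.heckeStep_of_apply_eq hij hne)
  · exact Or.inr (Or.inl (hz.heckeStep_of_gt hij h hne))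

theorem heckeStep_eq_none_of_le {a : ℕ} (ha : n ≤ a + 1) : heckeStep a z = none := by
  rw [heckeStep, dif_neg (by omega)]

theorem IsFPF.of_heckeStep_eq_some (hz : IsFPF z) {a : ℕ} (h : heckeStep a z = some y) :
    IsFPF y := by
  have ha : a + 1 < n := by
    by_contra! ha
    simp [heckeStep_eq_none_of_le ha] at h
  rcases hz.heckeStep_cases (i := ⟨a, by omega⟩) (j := ⟨a + 1, ha⟩) rfl with h' | h' | h' <;>
    rw [h'] at h
  · exact absurd h (by simp)
  · exact Option.some.inj h ▸ hz
  · exact Option.some.inj h ▸ hz.swap_conj _ _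

theorem IsFPF.heckeStep_swap_conj (hz : IsFPF z) (hij : (j : ℕ) = i + 1)
    (hkl : (l : ℕ) = k + 1) (hik : i ≠ k) (hil : i ≠ l) (hjk : j ≠ k) (hjl : j ≠ l)
    (h : ¬(z i = k ∧ z j = l)) (h' : ¬(z i = l ∧ z j = k)) :
    heckeStep i (Equiv.swap k l * z * Equiv.swap k l) =
      (heckeStep i z).map fun y => Equiv.swap k l * y * Equiv.swap k l := by
  have apply_i : (Equiv.swap k l * z * Equiv.swap k l) i = Equiv.swap k l (z i) := by
    simp [Equiv.swap_apply_of_ne_of_ne hik hil]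
  have apply_j : (Equiv.swap k l * z * Equiv.swap k l) j = Equiv.swap k l (z j) := by
    simp [Equiv.swap_apply_of_ne_of_ne hjk hjl]
  have match_iff : Equiv.swap k l (z i) = j ↔ z i = j := by
    rw [Equiv.swap_apply_eq_iff, Equiv.swap_apply_of_ne_of_ne hjk hjl]
  have hcomm := swap_mul_swap_comm hik hil hjk hjl
  have hz' := hz.swap_conj k l
  rcases (z.injective.ne (lt_of_val_eq_add_one hij).ne).lt_or_gt with hlt | hgt
  · rw [heckeStep_of_lt hij hlt, heckeStep_of_lt hij
      (by rwa [apply_i, apply_j, swap_lt_swap_iff_of_adjacent hkl h h'])]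
    simp only [Option.map_some, ← mul_assoc, hcomm]
    simp only [mul_assoc, hcomm]
  by_cases hne : z i = j
  · rw [hz.heckeStep_of_apply_eq hij hne,
      hz'.heckeStep_of_apply_eq hij (by rwa [apply_i, match_iff]), Option.map_none]
  · rw [hz.heckeStep_of_gt hij hgt hne, hz'.heckeStep_of_gt hij _ (by rwa [apply_i, Ne, match_iff]),
      Option.map_some]
    rwa [apply_i, apply_j,
      swap_lt_swap_iff_of_adjacent hkl (fun h => h' h.symm) fun h'' => h h''.symm]

theorem IsFPF.heckeStep_comm_of_exchange (hz : IsFPF z) (hij : (j : ℕ) = i + 1)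
    (hkl : (l : ℕ) = k + 1) (hik : i ≠ k) (hil : i ≠ l) (hjk : j ≠ k) (hjl : j ≠ l)
    (hi : z i = k) (hj : z j = l) :
    (heckeStep i z).bind (heckeStep k) = (heckeStep k z).bind (heckeStep i) := by
  have hk := hz.apply_eq_comm.1 hi
  have hl := hz.apply_eq_comm.1 hj
  have hltij := lt_of_val_eq_add_one hij
  have hltkl := lt_of_val_eq_add_one hkl
  have conj_eq : Equiv.swap k l * z * Equiv.swap k l = Equiv.swap i j * z * Equiv.swap i j := by
    rw [mul_assoc, mul_assoc, Equiv.mul_swap_eq_swap_mul, Equiv.mul_swap_eq_swap_mul, hi, hj, hk,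
      hl, ← mul_assoc, ← mul_assoc, swap_mul_swap_comm hik hil hjk hjl]
  rw [heckeStep_of_lt hij (by rwa [hi, hj]), heckeStep_of_lt hkl (by rwa [hk, hl]),
    Option.bind_some, Option.bind_some]
  have apply_i : (Equiv.swap k l * z * Equiv.swap k l) i = l := by
    simp [Equiv.swap_apply_of_ne_of_ne hik hil, hi]
  have apply_j : (Equiv.swap k l * z * Equiv.swap k l) j = k := by
    simp [Equiv.swap_apply_of_ne_of_ne hjk hjl, hj]
  have apply_k : (Equiv.swap i j * z * Equiv.swap i j) k = j := by
    simp [Equiv.swap_apply_of_ne_of_ne hik.symm hjk.symm, hk]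
  have apply_l : (Equiv.swap i j * z * Equiv.swap i j) l = i := by
    simp [Equiv.swap_apply_of_ne_of_ne hil.symm hjl.symm, hl]
  rw [(hz.swap_conj i j).heckeStep_of_gt hkl (by rwa [apply_k, apply_l]) (by rwa [apply_k]),
    (hz.swap_conj k l).heckeStep_of_gt hij (by rwa [apply_i, apply_j])
      (by rw [apply_i]; exact hjl.symm), conj_eq]

theorem IsFPF.heckeStep_comm_of_exchange_gt (hz : IsFPF z) (hij : (j : ℕ) = i + 1)
    (hkl : (l : ℕ) = k + 1) (hjl : j ≠ l) (hi : z i = l) (hj : z j = k) :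
    (heckeStep i z).bind (heckeStep k) = (heckeStep k z).bind (heckeStep i) := by
  have hl := hz.apply_eq_comm.1 hi
  have hk := hz.apply_eq_comm.1 hj
  have hltij := lt_of_val_eq_add_one hij
  have hltkl := lt_of_val_eq_add_one hkl
  rw [hz.heckeStep_of_gt hij (by rwa [hi, hj]) (hi ▸ hjl.symm),
    hz.heckeStep_of_gt hkl (by rwa [hk, hl]) (hk ▸ hjl), Option.bind_some, Option.bind_some,
    hz.heckeStep_of_gt hij (by rwa [hi, hj]) (hi ▸ hjl.symm),
    hz.heckeStep_of_gt hkl (by rwa [hk, hl]) (hk ▸ hjl)]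

theorem IsFPF.heckeStep_comm (hz : IsFPF z) (hij : (j : ℕ) = i + 1)
    (hkl : (l : ℕ) = k + 1) (hjk : j < k) :
    (heckeStep i z).bind (heckeStep k) = (heckeStep k z).bind (heckeStep i) := by
  have hltij := lt_of_val_eq_add_one hij
  have hltkl := lt_of_val_eq_add_one hkl
  have hik := (hltij.trans hjk).ne
  have hil := (hltij.trans (hjk.trans hltkl)).ne
  have hjl := (hjk.trans hltkl).ne
  by_cases h : z i = k ∧ z j = l
  · exact hz.heckeStep_comm_of_exchange hij hkl hik hil hjk.ne hjl h.1 h.2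
  by_cases h' : z i = l ∧ z j = k
  · exact hz.heckeStep_comm_of_exchange_gt hij hkl hjl h'.1 h'.2
  have step_i := hz.heckeStep_swap_conj hij hkl hik hil hjk.ne hjl h h'
  have step_k := hz.heckeStep_swap_conj hkl hij hik.symm hjk.ne' hil.symm hjl.symm
    (by rwa [hz.apply_eq_comm, hz.apply_eq_comm (i := l)])
    (by rwa [hz.apply_eq_comm, hz.apply_eq_comm (i := l), and_comm])
  have hcomm := swap_mul_swap_comm hik hil hjk.ne hjl
  rcases hz.heckeStep_cases hij with hi | hi | hi <;>
    rcases hz.heckeStep_cases hkl with hk | hk | hk <;>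
    simp only [hi, hk, step_i, step_k, Option.bind_none, Option.bind_some, Option.map_none,
      Option.map_some]
  simp only [← mul_assoc, hcomm]
  simp only [mul_assoc, hcomm]

theorem IsFPF.swap_conj_apply_of_ne (hz : IsFPF z) (hi : k ≠ i) (hj : k ≠ j) (hi' : z i ≠ k)
    (hj' : z j ≠ k) : (Equiv.swap i j * z * Equiv.swap i j) k = z k := by
  simp [Equiv.swap_apply_of_ne_of_ne hi hj,
    Equiv.swap_apply_of_ne_of_ne (mt hz.apply_eq_comm.2 hi') (mt hz.apply_eq_comm.2 hj')]

/-- A fixed-point-free involution none of whose cycles lies in `{a, b, c}`. On these the letters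
`a` and `b = a + 1` act by sorting the values at `a, b, c` into decreasing order. -/
structure IsFreeOn (a b c : Fin n) (z : Equiv.Perm (Fin n)) : Prop where
  isFPF : IsFPF z
  ab : z a ≠ b
  ac : z a ≠ c
  bc : z b ≠ c

theorem IsFreeOn.swap_conj_left (hz : IsFreeOn a b c z) (hac : a ≠ c) (hbc : b ≠ c) :
    let y := Equiv.swap a b * z * Equiv.swap a b
    IsFreeOn a b c y ∧ y a = z b ∧ y b = z a ∧ y c = z c := by
  have ha := hz.isFPF.swap_conj_apply_left hz.ab
  have hb := hz.isFPF.swap_conj_apply_right hz.ab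
  have hc := hz.isFPF.swap_conj_apply_of_ne hac.symm hbc.symm hz.ac hz.bc
  exact ⟨⟨hz.isFPF.swap_conj a b, ha ▸ hz.isFPF.2 b, ha ▸ hz.bc, hb ▸ hz.ac⟩, ha, hb, hc⟩

theorem IsFreeOn.swap_conj_right (hz : IsFreeOn a b c z) (hab : a ≠ b) (hac : a ≠ c) :
    let y := Equiv.swap b c * z * Equiv.swap b c
    IsFreeOn a b c y ∧ y a = z a ∧ y b = z c ∧ y c = z b := by
  have hb := hz.isFPF.swap_conj_apply_left hz.bc
  have hc := hz.isFPF.swap_conj_apply_right hz.bc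
  have ha := hz.isFPF.swap_conj_apply_of_ne hab hac (mt hz.isFPF.apply_eq_comm.2 hz.ab)
    (mt hz.isFPF.apply_eq_comm.2 hz.ac)
  exact ⟨⟨hz.isFPF.swap_conj b c, ha ▸ hz.ab, ha ▸ hz.ac, hb ▸ hz.isFPF.2 c⟩, ha, hb, hc⟩

theorem IsFreeOn.heckeStep_braid (hz : IsFreeOn a b c z) (hab : (b : ℕ) = a + 1)
    (hbc : (c : ℕ) = b + 1) :
    ((heckeStep a z).bind (heckeStep b)).bind (heckeStep a) =
      ((heckeStep b z).bind (heckeStep a)).bind (heckeStep b) := by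
  have hltab := lt_of_val_eq_add_one hab
  have hltbc := lt_of_val_eq_add_one hbc
  have hac := (hltab.trans hltbc).ne
  have step_a : ∀ y, IsFreeOn a b c y → heckeStep a y =
      some (if y a < y b then Equiv.swap a b * y * Equiv.swap a b else y) := by
    intro y hy
    rcases (y.injective.ne hltab.ne).lt_or_gt with h | h
    · rw [heckeStep_of_lt hab h, if_pos h]
    · rw [hy.isFPF.heckeStep_of_gt hab h hy.ab, if_neg h.not_gt]
  have step_b : ∀ y, IsFreeOn a b c y → heckeStep b y =
      some (if y b < y c then Equiv.swap b c * y * Equiv.swap b c else y) := by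
    intro y hy
    rcases (y.injective.ne hltbc.ne).lt_or_gt with h | h
    · rw [heckeStep_of_lt hbc h, if_pos h]
    · rw [hy.isFPF.heckeStep_of_gt hbc h hy.bc, if_neg h.not_gt]
  have conj_ab := fun y (hy : IsFreeOn a b c y) => hy.swap_conj_left hac hltbc.ne
  have conj_bc := fun y (hy : IsFreeOn a b c y) => hy.swap_conj_right hltab.ne hac
  have hbraid : Equiv.swap a b * (Equiv.swap b c * (Equiv.swap a b * z * Equiv.swap a b) *
      Equiv.swap b c) * Equiv.swap a b = Equiv.swap b c * (Equiv.swap a b * (Equiv.swap b c * z *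
      Equiv.swap b c) * Equiv.swap a b) * Equiv.swap b c := by
    have h := swap_mul_swap_mul_swap_braid hltab.ne hac hltbc.ne
    simp only [← mul_assoc, h]
    simp only [mul_assoc, ← h]
  rcases (z.injective.ne hltab.ne).lt_or_gt with h | h <;>
    rcases (z.injective.ne hltbc.ne).lt_or_gt with h' | h' <;>
    rcases (z.injective.ne hac).lt_or_gt with h'' | h'' <;>
    simp (maxDischargeDepth := 4) only [step_a, step_b, conj_ab, conj_bc, hz, hbraid,
      Option.bind_some, h, h', h'', h.not_gt, h'.not_gt, h''.not_gt, if_true, if_false]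
  all_goals omega

theorem IsFPF.swap_conj_apply_of_apply_eq_left (hz : IsFPF z) (hki : k ≠ i) (hkj : k ≠ j)
    (h : z i = k) : (Equiv.swap i j * z * Equiv.swap i j) k = j := by
  simp [Equiv.swap_apply_of_ne_of_ne hki hkj, hz.apply_eq_comm.1 h]

theorem IsFPF.swap_conj_apply_of_apply_eq_right (hz : IsFPF z) (hki : k ≠ i) (hkj : k ≠ j)
    (h : z j = k) : (Equiv.swap i j * z * Equiv.swap i j) k = i := by
  simp [Equiv.swap_apply_of_ne_of_ne hki hkj, hz.apply_eq_comm.1 h]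

theorem IsFPF.heckeStep_bab_eq_none_of_apply_eq (hz : IsFPF z) (hab : (b : ℕ) = a + 1)
    (hbc : (c : ℕ) = b + 1) (h : z a = b) :
    ((heckeStep b z).bind (heckeStep a)).bind (heckeStep b) = none := by
  have hltab := lt_of_val_eq_add_one hab
  have hltbc := lt_of_val_eq_add_one hbc
  have hac := (hltab.trans hltbc).ne
  have hb := hz.apply_eq_comm.1 h
  have hne : z b ≠ c := hb ▸ hac
  rcases (z.injective.ne hltbc.ne).lt_or_gt with hlt | hgt
  · have hz' := hz.swap_conj b c
    have apply_a := hz.swap_conj_apply_of_apply_eq_left hltab.ne hac hb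
    have apply_b := hz.swap_conj_apply_left hne
    have hcz : c < z c := by
      have := hz.2 c
      have : z c ≠ b := fun hc => hac (z.injective (h.trans hc.symm))
      omega
    have hlt' : (Equiv.swap b c * z * Equiv.swap b c) a < (Equiv.swap b c * z * Equiv.swap b c) b :=
      by rwa [apply_a, apply_b]
    rw [heckeStep_of_lt hbc hlt, Option.bind_some, heckeStep_of_lt hab hlt', Option.bind_some]
    refine (hz'.swap_conj a b).heckeStep_of_apply_eq hbc ?_
    rw [hz'.swap_conj_apply_right (hz'.apply_ne_of_lt hab hlt'), apply_a]
  · rw [hz.heckeStep_of_gt hbc hgt hne, Option.bind_some, hz.heckeStep_of_apply_eq hab h,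
      Option.bind_none]

theorem IsFPF.heckeStep_aba_eq_none_of_apply_eq (hz : IsFPF z) (hab : (b : ℕ) = a + 1)
    (hbc : (c : ℕ) = b + 1) (h : z b = c) :
    ((heckeStep a z).bind (heckeStep b)).bind (heckeStep a) = none := by
  have hltab := lt_of_val_eq_add_one hab
  have hltbc := lt_of_val_eq_add_one hbc
  have hac := (hltab.trans hltbc).ne
  have hne : z a ≠ b := fun ha => hac ((hz.apply_eq_comm.1 ha).symm.trans h)
  rcases (z.injective.ne hltab.ne).lt_or_gt with hlt | hgt
  · have hz' := hz.swap_conj a b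
    have apply_a := hz.swap_conj_apply_left hne
    have apply_b := hz.swap_conj_apply_right hne
    have apply_c := hz.swap_conj_apply_of_apply_eq_right hac.symm hltbc.ne' h
    have hza : z a < a := by
      have := hz.2 a
      omega
    have hlt' : (Equiv.swap a b * z * Equiv.swap a b) b < (Equiv.swap a b * z * Equiv.swap a b) c :=
      by rwa [apply_b, apply_c]
    rw [heckeStep_of_lt hab hlt, Option.bind_some, heckeStep_of_lt hbc hlt', Option.bind_some]
    exact (hz'.swap_conj b c).heckeStep_of_apply_eq hab
      (hz'.swap_conj_apply_of_apply_eq_right hltab.ne hac (hz'.apply_eq_comm.1 (apply_a.trans h)))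
  · rw [hz.heckeStep_of_gt hab hgt hne, Option.bind_some, hz.heckeStep_of_apply_eq hbc h,
      Option.bind_none]

theorem IsFPF.heckeStep_braid_of_apply_eq (hz : IsFPF z) (hab : (b : ℕ) = a + 1)
    (hbc : (c : ℕ) = b + 1) (h : z a = c) :
    ((heckeStep a z).bind (heckeStep b)).bind (heckeStep a) =
      ((heckeStep b z).bind (heckeStep a)).bind (heckeStep b) := by
  have hltab := lt_of_val_eq_add_one hab
  have hltbc := lt_of_val_eq_add_one hbc
  have hac := (hltab.trans hltbc).ne
  have hc := hz.apply_eq_comm.1 h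
  have hne : z a ≠ b := h ▸ hltbc.ne'
  have hne' : z b ≠ c := fun hb => hltab.ne' (z.injective (hb.trans h.symm))
  have hne'' : z b ≠ a := mt hz.apply_eq_comm.2 hne
  have step_a : heckeStep a (Equiv.swap b c * z * Equiv.swap b c) = none :=
    (hz.swap_conj b c).heckeStep_of_apply_eq hab
      (hz.swap_conj_apply_of_apply_eq_right hltab.ne hac hc)
  have step_b : heckeStep b (Equiv.swap a b * z * Equiv.swap a b) = none :=
    (hz.swap_conj a b).heckeStep_of_apply_eq hbc ((hz.swap_conj_apply_right hne).trans h)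
  have := hz.2 b
  rcases hne''.lt_or_gt with hlt | hgt
  · have hab' : z b < z a := by omega
    rw [hz.heckeStep_of_gt hab hab' hne, Option.bind_some, heckeStep_of_lt hbc (hc ▸ hlt),
      Option.bind_some, step_a, Option.bind_none]
  · have hab' : z a < z b := by omega
    rw [hz.heckeStep_of_gt hbc (hc ▸ hgt) hne', Option.bind_some, heckeStep_of_lt hab hab',
      Option.bind_some, step_b, Option.bind_none]

theorem IsFPF.heckeStep_braid (hz : IsFPF z) (hab : (b : ℕ) = a + 1) (hbc : (c : ℕ) = b + 1) :
    ((heckeStep a z).bind (heckeStep b)).bind (heckeStep a) =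
      ((heckeStep b z).bind (heckeStep a)).bind (heckeStep b) := by
  by_cases h : z a = b
  · rw [hz.heckeStep_of_apply_eq hab h, hz.heckeStep_bab_eq_none_of_apply_eq hab hbc h,
      Option.bind_none, Option.bind_none]
  by_cases h' : z b = c
  · rw [hz.heckeStep_of_apply_eq hbc h', hz.heckeStep_aba_eq_none_of_apply_eq hab hbc h',
      Option.bind_none, Option.bind_none]
  by_cases h'' : z a = c
  · exact hz.heckeStep_braid_of_apply_eq hab hbc h''
  · exact (IsFreeOn.mk hz h h'' h').heckeStep_braid hab hbc

theorem isBraidAction_heckeStep (n : ℕ) :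
    IsBraidAction n (fun o a => o.bind (heckeStep a))
      {o : Option (Equiv.Perm (Fin n)) | ∀ z ∈ o, IsFPF z} where
  mem o ho a y hy := by
    obtain ⟨z, hz, hy⟩ := Option.bind_eq_some_iff.1 hy
    exact (ho z hz).of_heckeStep_eq_some hy
  comm o ho a b hab hb := by
    rcases o with _ | z
    · rfl
    · exact (ho z rfl).heckeStep_comm (i := ⟨a, by omega⟩) (j := ⟨a + 1, by omega⟩)
        (k := ⟨b, by omega⟩) (l := ⟨b + 1, hb⟩) rfl rfl hab
  braid o ho a ha := by
    rcases o with _ | z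
    · rfl
    · exact (ho z rfl).heckeStep_braid (a := ⟨a, by omega⟩) (b := ⟨a + 1, by omega⟩)
        (c := ⟨a + 2, ha⟩) rfl rfl

end HeckeStep

/-! ### Hecke atoms -/

section Bfpf

variable {n : ℕ} {hn : n % 2 = 0} {i j : Fin n} {w y z : Equiv.Perm (Fin n)}

theorem IsFPF.of_heckeApply_eq_some (hy : IsFPF y) {l : List ℕ} (h : heckeApply l y = some z) :
    IsFPF z :=
  (isBraidAction_heckeStep n).foldl_mem (x := some y) (by simpa using hy) l z h

theorem heckeApply_concat (l : List ℕ) (a : ℕ) (y : Equiv.Perm (Fin n)) :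
    heckeApply (l ++ [a]) y = (heckeApply l y).bind (heckeStep a) :=
  List.foldl_concat ..

theorem mem_Bfpf : w ∈ Bfpf n hn z ↔
    ∃ l, IsReducedWord n w l ∧ heckeApply l (theta n hn) = some z := by
  simp [Bfpf]

theorem mem_Bfpf_iff_of_isReducedWord {l : List ℕ} (hl : IsReducedWord n w l) :
    w ∈ Bfpf n hn z ↔ heckeApply l (theta n hn) = some z := by
  rw [mem_Bfpf]
  refine ⟨fun ⟨l', hl', h⟩ => ?_, fun h => ⟨l, hl, h⟩⟩
  rw [← h]
  exact (isBraidAction_heckeStep n).foldl_eq hl hl' (by simpa using isFPF_theta hn)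

theorem IsFPF.of_mem_Bfpf (h : w ∈ Bfpf n hn z) : IsFPF z := by
  obtain ⟨l, -, hl⟩ := mem_Bfpf.1 h
  exact (isFPF_theta hn).of_heckeApply_eq_some hl

theorem one_mem_Bfpf_iff : 1 ∈ Bfpf n hn z ↔ z = theta n hn := by
  rw [mem_Bfpf_iff_of_isReducedWord (isReducedWord_nil_iff.2 rfl), eq_comm]
  exact Option.some_inj

theorem eq_of_mem_Bfpf (hy : w ∈ Bfpf n hn y) (hz : w ∈ Bfpf n hn z) : y = z := by
  obtain ⟨l, hl⟩ := exists_isReducedWord w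
  rw [mem_Bfpf_iff_of_isReducedWord hl] at hy hz
  exact Option.some.inj (hy.symm.trans hz)

theorem IsFPF.heckeStep_eq_some_iff (hy : IsFPF y) (hij : (j : ℕ) = i + 1) :
    heckeStep i y = some z ↔
      z j < z i ∧ z i ≠ j ∧ (y = z ∨ y = Equiv.swap i j * z * Equiv.swap i j) := by
  constructor
  · intro h
    rcases (y.injective.ne (lt_of_val_eq_add_one hij).ne).lt_or_gt with hlt | hgt
    · have hne := hy.apply_ne_of_lt hij hlt
      obtain rfl : Equiv.swap i j * y * Equiv.swap i j = z := by
        simpa [heckeStep_of_lt hij hlt] using h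
      rw [hy.swap_conj_apply_left hne, hy.swap_conj_apply_right hne, swap_conj_swap_conj]
      exact ⟨hlt, hy.2 j, Or.inr rfl⟩
    by_cases hne : y i = j
    · simp [hy.heckeStep_of_apply_eq hij hne] at h
    · obtain rfl : y = z := by simpa [hy.heckeStep_of_gt hij hgt hne] using h
      exact ⟨hgt, hne, Or.inl rfl⟩
  · rintro ⟨hgt, hne, rfl | rfl⟩
    · exact hy.heckeStep_of_gt hij hgt hne
    · have hz : IsFPF z := swap_conj_swap_conj i j z ▸ hy.swap_conj i j
      rw [heckeStep_of_lt hij, swap_conj_swap_conj]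
      rwa [hz.swap_conj_apply_left hne, hz.swap_conj_apply_right hne]

theorem mem_Bfpf_iff_of_gt (hij : (j : ℕ) = i + 1) (h : w j < w i) :
    w ∈ Bfpf n hn z ↔ z j < z i ∧ z i ≠ j ∧ (w * Equiv.swap i j ∈ Bfpf n hn z ∨
      w * Equiv.swap i j ∈ Bfpf n hn (Equiv.swap i j * z * Equiv.swap i j)) := by
  obtain ⟨l, hl⟩ := exists_isReducedWord (w * Equiv.swap i j)
  have hstep : w ∈ Bfpf n hn z ↔
      ∃ y, w * Equiv.swap i j ∈ Bfpf n hn y ∧ heckeStep i y = some z := by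
    simp only [mem_Bfpf_iff_of_isReducedWord hl, heckeApply_concat, Option.bind_eq_some_iff,
      mem_Bfpf_iff_of_isReducedWord ((isReducedWord_concat_iff hij).2 ⟨h, hl⟩)]
  rw [hstep]
  constructor
  · rintro ⟨y, hy, hyz⟩
    obtain ⟨hgt, hne, rfl | rfl⟩ := ((IsFPF.of_mem_Bfpf hy).heckeStep_eq_some_iff hij).1 hyz
    exacts [⟨hgt, hne, Or.inl hy⟩, ⟨hgt, hne, Or.inr hy⟩]
  · rintro ⟨hgt, hne, hy | hy⟩
    exacts [⟨_, hy, ((IsFPF.of_mem_Bfpf hy).heckeStep_eq_some_iff hij).2 ⟨hgt, hne, Or.inl rfl⟩⟩,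
      ⟨_, hy, ((IsFPF.of_mem_Bfpf hy).heckeStep_eq_some_iff hij).2 ⟨hgt, hne, Or.inr rfl⟩⟩]

theorem lt_of_mem_Bfpf (hij : (j : ℕ) = i + 1) (hz : z i < z j ∨ z i = j)
    (hw : w ∈ Bfpf n hn z) : w i < w j := by
  refine (w.injective.ne (lt_of_val_eq_add_one hij).ne).lt_or_gt.resolve_right fun h => ?_
  obtain ⟨hgt, hne, -⟩ := (mem_Bfpf_iff_of_gt hij h).1 hw
  exact hz.elim hgt.asymm hne

theorem Bfpf_theta (hn : n % 2 = 0) : Bfpf n hn (theta n hn) = {1} := by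
  refine Finset.eq_singleton_iff_unique_mem.2 ⟨one_mem_Bfpf_iff.2 rfl, fun w hw => ?_⟩
  exact eq_one_of_forall_lt fun i j hij => lt_of_mem_Bfpf hij (theta_lt_or_apply_eq hn hij) hw

theorem fpfLen_le_invLen (hw : w ∈ Bfpf n hn z) : fpfLen z ≤ invLen w := by
  induction w using induction_from_one generalizing z with
  | one => simp [one_mem_Bfpf_iff.1 hw, fpfLen_theta]
  | step w i j hij h ih =>
    have hlen := invLen_eq_of_gt hij h
    obtain ⟨hgt, hne, hmem | hmem⟩ := (mem_Bfpf_iff_of_gt hij h).1 hw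
    · have := ih hmem
      omega
    · have := ih hmem
      have := (IsFPF.of_mem_Bfpf hw).fpfLen_eq_of_gt hij hgt hne
      omega

end Bfpf

/-! ### Padding by fixed points and by matched pairs -/

section Padding

variable {p n : ℕ} {w : Equiv.Perm (Fin n)}

@[simp]
theorem extPerm_natAdd (u : Equiv.Perm (Fin p)) (w : Equiv.Perm (Fin n)) (i : Fin n) :
    extPerm u w (Fin.natAdd p i) = Fin.natAdd p (w i) := by
  simp [extPerm]

@[simp]
theorem extPerm_castAdd (u : Equiv.Perm (Fin p)) (w : Equiv.Perm (Fin n)) (i : Fin p) :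
    extPerm u w (Fin.castAdd n i) = Fin.castAdd n (u i) := by
  simp [extPerm]

theorem perm_ext_addCases {f g : Equiv.Perm (Fin (p + n))}
    (hleft : ∀ i, f (Fin.castAdd n i) = g (Fin.castAdd n i))
    (hright : ∀ i, f (Fin.natAdd p i) = g (Fin.natAdd p i)) : f = g :=
  Equiv.ext fun x => Fin.addCases hleft hright x

theorem extPerm_one : extPerm (1 : Equiv.Perm (Fin p)) (1 : Equiv.Perm (Fin n)) = 1 := by
  apply perm_ext_addCases <;> intro i <;> simp

theorem extPerm_mul (u u' : Equiv.Perm (Fin p)) (w w' : Equiv.Perm (Fin n)) :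
    extPerm (u * u') (w * w') = extPerm u w * extPerm u' w' := by
  apply perm_ext_addCases <;> intro i <;> simp

theorem extPerm_injective (u : Equiv.Perm (Fin p)) :
    Function.Injective (extPerm u : Equiv.Perm (Fin n) → Equiv.Perm (Fin (p + n))) := by
  intro w w' h
  ext1 i
  apply Fin.natAdd_injective n p
  rw [← extPerm_natAdd u, h, extPerm_natAdd]

theorem extPerm_one_swap (i j : Fin n) :
    extPerm (1 : Equiv.Perm (Fin p)) (Equiv.swap i j) =
      Equiv.swap (Fin.natAdd p i) (Fin.natAdd p j) := by
  have castAdd_ne (k : Fin p) (l : Fin n) : Fin.castAdd n k ≠ Fin.natAdd p l :=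
    Fin.ne_of_val_ne (by simp; omega)
  apply perm_ext_addCases <;> intro k
  · rw [extPerm_castAdd, Equiv.swap_apply_of_ne_of_ne (castAdd_ne k i) (castAdd_ne k j),
      Equiv.Perm.one_apply]
  · rw [extPerm_natAdd, (Fin.natAdd_injective n p).swap_apply]

theorem extPerm_swap_conj (u : Equiv.Perm (Fin p)) (w : Equiv.Perm (Fin n)) (i j : Fin n) :
    extPerm u (Equiv.swap i j * w * Equiv.swap i j) =
      Equiv.swap (Fin.natAdd p i) (Fin.natAdd p j) * extPerm u w *
        Equiv.swap (Fin.natAdd p i) (Fin.natAdd p j) := by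
  rw [← extPerm_one_swap, ← extPerm_mul, ← extPerm_mul, one_mul, mul_one]

theorem extPerm_mul_swap (u : Equiv.Perm (Fin p)) (w : Equiv.Perm (Fin n)) (i j : Fin n) :
    extPerm u (w * Equiv.swap i j) =
      extPerm u w * Equiv.swap (Fin.natAdd p i) (Fin.natAdd p j) := by
  rw [← extPerm_one_swap, ← extPerm_mul, mul_one]

theorem extPerm_theta (hp : p % 2 = 0) (hn : n % 2 = 0) (hpn : (p + n) % 2 = 0) :
    extPerm (theta p hp) (theta n hn) = theta (p + n) hpn := by
  apply perm_ext_addCases <;> intro i <;> apply Fin.ext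
  · simp [theta_val]
  · have : (p + (i : ℕ)) % 2 = (i : ℕ) % 2 := by omega
    simp only [extPerm_natAdd, theta_val, Fin.val_natAdd, this]
    split_ifs <;> omega

theorem IsFPF.extPerm {u : Equiv.Perm (Fin p)} (hu : IsFPF u) (hw : IsFPF w) :
    IsFPF (extPerm u w) := by
  refine ⟨by rw [← extPerm_mul, hu.1, hw.1, extPerm_one], ?_⟩
  refine Fin.addCases (fun i => ?_) fun i => ?_
  · rw [extPerm_castAdd]
    exact (Fin.castAdd_injective p n).ne (hu.2 i)
  · rw [extPerm_natAdd]
    exact (Fin.natAdd_injective n p).ne (hw.2 i)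

theorem val_natAdd_eq_add_one {i j : Fin n} (hij : (j : ℕ) = i + 1) :
    (Fin.natAdd p j : ℕ) = (Fin.natAdd p i : ℕ) + 1 := by
  simp [hij, add_assoc]

theorem invLen_extPerm_one (w : Equiv.Perm (Fin n)) :
    invLen (extPerm (1 : Equiv.Perm (Fin p)) w) = invLen w := by
  induction w using induction_from_one with
  | one => rw [extPerm_one, invLen_one, invLen_one]
  | step w i j hij h ih =>
    rw [invLen_eq_of_gt hij h, invLen_eq_of_gt (val_natAdd_eq_add_one hij) (by simpa using h),
      ← extPerm_mul_swap, ih]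

theorem fpfLen_extPerm_theta (hp : p % 2 = 0) (hn : n % 2 = 0) {z : Equiv.Perm (Fin n)}
    (hz : IsFPF z) : fpfLen (extPerm (theta p hp) z) = fpfLen z := by
  refine hz.induction_from_theta hn ?_ fun z i j hz hij h hne ih => ?_
  · rw [extPerm_theta hp hn (by omega), fpfLen_theta, fpfLen_theta]
  · rw [hz.fpfLen_eq_of_gt hij h hne,
      ((isFPF_theta hp).extPerm hz).fpfLen_eq_of_gt (val_natAdd_eq_add_one hij) (by simpa using h)
        (by simpa using hne), ← extPerm_swap_conj, ih]

theorem extPerm_one_mem_Bfpf_iff (hp : p % 2 = 0) (hn : n % 2 = 0) (hpn : (p + n) % 2 = 0)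
    {w z : Equiv.Perm (Fin n)} :
    extPerm 1 w ∈ Bfpf (p + n) hpn (extPerm (theta p hp) z) ↔ w ∈ Bfpf n hn z := by
  induction w using induction_from_one generalizing z with
  | one =>
    rw [extPerm_one, one_mem_Bfpf_iff, one_mem_Bfpf_iff, ← extPerm_theta hp hn hpn,
      (extPerm_injective _).eq_iff]
  | step w i j hij h ih =>
    rw [mem_Bfpf_iff_of_gt hij h, mem_Bfpf_iff_of_gt (val_natAdd_eq_add_one hij) (by simpa using h),
      ← extPerm_mul_swap, ← extPerm_swap_conj, ih, ih]
    simp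

/-- Inside the padding `Θ` the only descents are its matched pairs, and its last letter is
smaller than everything to its right. -/
theorem exists_natAdd_of_extPerm_theta_gt (hp : p % 2 = 0) {z : Equiv.Perm (Fin n)}
    {i j : Fin (p + n)} (hij : (j : ℕ) = i + 1)
    (h : extPerm (theta p hp) z j < extPerm (theta p hp) z i)
    (hne : extPerm (theta p hp) z i ≠ j) :
    ∃ i' j' : Fin n, (j' : ℕ) = i' + 1 ∧ i = Fin.natAdd p i' ∧ j = Fin.natAdd p j' := by
  induction i using Fin.addCases with
  | left i =>
    exfalso
    induction j using Fin.addCases with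
    | left j =>
      simp only [extPerm_castAdd, Fin.lt_def, ne_eq, Fin.ext_iff, Fin.val_castAdd, theta_val]
        at hij h hne
      split_ifs at h hne <;> omega
    | right j =>
      simp only [extPerm_castAdd, extPerm_natAdd, Fin.lt_def, Fin.val_castAdd, Fin.val_natAdd] at h
      omega
  | right i =>
    induction j using Fin.addCases with
    | left j =>
      simp only [Fin.val_castAdd, Fin.val_natAdd] at hij
      omega
    | right j => exact ⟨i, j, by simp only [Fin.val_natAdd] at hij; omega, rfl, rfl⟩

theorem exists_eq_extPerm_one_of_mem_Bfpf (hp : p % 2 = 0) (hpn : (p + n) % 2 = 0)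
    {u : Equiv.Perm (Fin (p + n))} {z : Equiv.Perm (Fin n)}
    (hu : u ∈ Bfpf (p + n) hpn (extPerm (theta p hp) z)) : ∃ w, u = extPerm 1 w := by
  induction u using induction_from_one generalizing z with
  | one => exact ⟨1, extPerm_one.symm⟩
  | step u i j hij h ih =>
    obtain ⟨hdesc, hne, hmem⟩ := (mem_Bfpf_iff_of_gt hij h).1 hu
    obtain ⟨i, j, -, rfl, rfl⟩ := exists_natAdd_of_extPerm_theta_gt hp hij hdesc hne
    rw [← extPerm_swap_conj] at hmem
    obtain ⟨w, hw⟩ := hmem.elim ih ih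
    exact ⟨w * Equiv.swap i j, by rw [extPerm_mul_swap, ← hw, Equiv.mul_swap_mul_self]⟩

theorem sum_Bfpf_extPerm_theta {M : Type*} [AddCommMonoid M] (hp : p % 2 = 0) (hn : n % 2 = 0)
    (hpn : (p + n) % 2 = 0) (z : Equiv.Perm (Fin n)) (f : Equiv.Perm (Fin (p + n)) → M) :
    ∑ u ∈ Bfpf (p + n) hpn (extPerm (theta p hp) z), f u =
      ∑ w ∈ Bfpf n hn z, f (extPerm 1 w) := by
  refine (Finset.sum_bij (fun w _ => extPerm 1 w) ?_ ?_ ?_ ?_).symm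
  · exact fun w hw => (extPerm_one_mem_Bfpf_iff hp hn hpn).2 hw
  · exact fun w _ w' _ h => extPerm_injective _ h
  · intro u hu
    obtain ⟨w, rfl⟩ := exists_eq_extPerm_one_of_mem_Bfpf hp hpn hu
    exact ⟨w, (extPerm_one_mem_Bfpf_iff hp hn hpn).1 hu, rfl⟩
  · exact fun w _ => rfl

end Padding

/-! ### Divided differences -/

section DividedDifference

variable {n : ℕ} {i j : Fin n} {f g f' g' : MvPolynomial (Fin n) Rb}

/-- The action of the transposition `(i j)` on polynomials by exchanging `x_i` and `x_j`. -/
def swapVars (i j : Fin n) : MvPolynomial (Fin n) Rb →ₐ[Rb] MvPolynomial (Fin n) Rb :=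
  rename ⇑(Equiv.swap i j)

@[simp]
theorem swapVars_X (i j k : Fin n) : swapVars i j (X k) = X (Equiv.swap i j k) :=
  rename_X _ _

@[simp]
theorem swapVars_C (i j : Fin n) (c : Rb) : swapVars i j (C c) = C c :=
  rename_C _ _

@[simp]
theorem swapVars_swapVars (i j : Fin n) (f : MvPolynomial (Fin n) Rb) :
    swapVars i j (swapVars i j f) = f := by
  have hinv : ⇑(Equiv.swap i j) ∘ ⇑(Equiv.swap i j) = id := by
    ext1 k
    exact Equiv.swap_apply_self i j k
  rw [swapVars, rename_rename, hinv, rename_id_apply]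

theorem isDivDiffB_iff :
    IsDivDiffB i j f g ↔
      (X i - X j) * g = (1 + C bb * X j) * f - (1 + C bb * X i) * swapVars i j f := by
  change _ = _ - swapVars i j ((1 + C bb * X j) * f) ↔ _
  simp

theorem X_sub_X_ne_zero (h : i ≠ j) : (X i - X j : MvPolynomial (Fin n) Rb) ≠ 0 :=
  sub_ne_zero.2 (X_injective.ne h)

theorem IsDivDiffB.swapVars_eq (hij : i ≠ j) (h : IsDivDiffB i j f g) : swapVars i j g = g := by
  rw [isDivDiffB_iff] at h
  have hswap := congrArg (swapVars i j) h
  simp only [map_mul, map_sub, map_add, map_one, swapVars_X, swapVars_C, swapVars_swapVars,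
    Equiv.swap_apply_left, Equiv.swap_apply_right] at hswap
  exact mul_left_cancel₀ (X_sub_X_ne_zero hij) (by linear_combination -hswap - h)

theorem isDivDiffB_of_swapVars_eq (h : swapVars i j f = f) : IsDivDiffB i j f (-C bb * f) := by
  rw [isDivDiffB_iff, h]
  ring

theorem IsDivDiffB.add (h : IsDivDiffB i j f g) (h' : IsDivDiffB i j f' g') :
    IsDivDiffB i j (f + f') (g + g') := by
  rw [isDivDiffB_iff] at *
  rw [map_add]
  linear_combination h + h'

theorem IsDivDiffB.sub (h : IsDivDiffB i j f g) (h' : IsDivDiffB i j f' g') :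
    IsDivDiffB i j (f - f') (g - g') := by
  rw [isDivDiffB_iff] at *
  rw [map_sub]
  linear_combination h - h'

theorem IsDivDiffB.mul_left (h : IsDivDiffB i j f g) {c : MvPolynomial (Fin n) Rb}
    (hc : swapVars i j c = c) : IsDivDiffB i j (c * f) (c * g) := by
  rw [isDivDiffB_iff] at *
  rw [map_mul, hc]
  linear_combination c * h

theorem IsDivDiffB.sum {ι : Type*} (s : Finset ι) {f g : ι → MvPolynomial (Fin n) Rb}
    (h : ∀ a ∈ s, IsDivDiffB i j (f a) (g a)) :
    IsDivDiffB i j (∑ a ∈ s, f a) (∑ a ∈ s, g a) := by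
  simp only [isDivDiffB_iff, map_sum, Finset.mul_sum, ← Finset.sum_sub_distrib] at h ⊢
  exact Finset.sum_congr rfl h

end DividedDifference

/-! ### Grothendieck polynomials and the sum over Hecke atoms -/

section HeckeAtoms

variable {n : ℕ} {i j : Fin n} {w z : Equiv.Perm (Fin n)} {hn : n % 2 = 0}
  {G Gr : Equiv.Perm (Fin n) → MvPolynomial (Fin n) Rb}

theorem IsGrothFam.isDivDiffB_of_lt (hGr : IsGrothFam n Gr) (hij : (j : ℕ) = i + 1)
    (h : w i < w j) : IsDivDiffB i j (Gr (w * Equiv.swap i j)) (Gr w) := by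
  simpa using hGr.2 (w * Equiv.swap i j) i j hij (by simpa using h)

theorem IsGrothFam.swapVars_eq_of_lt (hGr : IsGrothFam n Gr) (hij : (j : ℕ) = i + 1)
    (h : w i < w j) : swapVars i j (Gr w) = Gr w :=
  (hGr.isDivDiffB_of_lt hij h).swapVars_eq (lt_of_val_eq_add_one hij).ne

theorem IsSpFam.isDivDiffB_of_gt (hG : IsSpFam n G) (hz : IsFPF z) (hij : (j : ℕ) = i + 1)
    (h : z j < z i) (hne : z i ≠ j) :
    IsDivDiffB i j (G z) (G (Equiv.swap i j * z * Equiv.swap i j)) :=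
  hG.2 z hz i j hij hne (mt hz.apply_eq_comm.2 hne) h

theorem IsSpFam.isDivDiffB_of_lt (hG : IsSpFam n G) (hz : IsFPF z) (hij : (j : ℕ) = i + 1)
    (h : z i < z j) : IsDivDiffB i j (G (Equiv.swap i j * z * Equiv.swap i j)) (G z) := by
  have hne := hz.apply_ne_of_lt hij h
  have hconj := hG.isDivDiffB_of_gt (hz.swap_conj i j) hij
    (by rwa [hz.swap_conj_apply_left hne, hz.swap_conj_apply_right hne])
    (by rw [hz.swap_conj_apply_left hne]; exact hz.2 j)
  rwa [swap_conj_swap_conj] at hconj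

theorem IsSpFam.swapVars_eq_of_lt (hG : IsSpFam n G) (hz : IsFPF z) (hij : (j : ℕ) = i + 1)
    (h : z i < z j) : swapVars i j (G z) = G z :=
  (hG.isDivDiffB_of_lt hz hij h).swapVars_eq (lt_of_val_eq_add_one hij).ne

/-- The sum `Σ_{w ∈ B_fpf(z)} β^{ℓ(w) - ℓ_fpf(z)} 𝔊_w`; the exponents are not truncated since
`ℓ_fpf(z) ≤ ℓ(w)` for every Hecke atom `w` of `z`. -/
def heckeAtomSum (hn : n % 2 = 0) (Gr : Equiv.Perm (Fin n) → MvPolynomial (Fin n) Rb)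
    (z : Equiv.Perm (Fin n)) : MvPolynomial (Fin n) Rb :=
  ∑ w ∈ Bfpf n hn z, C (bb ^ (invLen w - fpfLen z)) * Gr w

theorem heckeAtomSum_theta (hn : n % 2 = 0)
    (Gr : Equiv.Perm (Fin n) → MvPolynomial (Fin n) Rb) :
    heckeAtomSum hn Gr (theta n hn) = Gr 1 := by
  simp [heckeAtomSum, Bfpf_theta, invLen_one]

theorem IsGrothFam.swapVars_heckeAtomSum (hGr : IsGrothFam n Gr) (hij : (j : ℕ) = i + 1)
    (h : z i < z j ∨ z i = j) :
    swapVars i j (heckeAtomSum hn Gr z) = heckeAtomSum hn Gr z := by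
  rw [heckeAtomSum, map_sum]
  refine Finset.sum_congr rfl fun w hw => ?_
  rw [map_mul, swapVars_C, hGr.swapVars_eq_of_lt hij (lt_of_mem_Bfpf hij h hw)]

theorem sum_Bfpf_filter_gt {M : Type*} [AddCommMonoid M] (hz : IsFPF z) (hij : (j : ℕ) = i + 1)
    (h : z j < z i) (hne : z i ≠ j) (f : Equiv.Perm (Fin n) → M) :
    ∑ w ∈ Bfpf n hn z with w j < w i, f (w * Equiv.swap i j) =
      ∑ w ∈ Bfpf n hn z with w i < w j, f w +
        ∑ w ∈ Bfpf n hn (Equiv.swap i j * z * Equiv.swap i j), f w := by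
  set y := Equiv.swap i j * z * Equiv.swap i j
  have y_lt : y i < y j := by rwa [hz.swap_conj_apply_left hne, hz.swap_conj_apply_right hne]
  have hdisj : Disjoint {w ∈ Bfpf n hn z | w i < w j} (Bfpf n hn y) := by
    refine Finset.disjoint_left.2 fun w hw hw' => y_lt.not_gt ?_
    rwa [← eq_of_mem_Bfpf (Finset.mem_filter.1 hw).1 hw']
  rw [← Finset.sum_union hdisj]
  refine Finset.sum_bij' (fun w _ => w * Equiv.swap i j) (fun w _ => w * Equiv.swap i j)
    ?_ ?_ (by simp) (by simp) (by simp)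
  · intro w hw
    rw [Finset.mem_filter] at hw
    have hmem := ((mem_Bfpf_iff_of_gt hij hw.2).1 hw.1).2.2
    simpa [hw.2] using hmem
  · intro w hw
    have w_lt : w i < w j := by
      rcases Finset.mem_union.1 hw with hw | hw
      · exact (Finset.mem_filter.1 hw).2
      · exact lt_of_mem_Bfpf hij (Or.inl y_lt) hw
    rw [Finset.mem_union, Finset.mem_filter, and_iff_left w_lt] at hw
    rw [Finset.mem_filter, mem_Bfpf_iff_of_gt hij (by simpa using w_lt)]
    simpa [h, hne, w_lt] using hw

theorem IsGrothFam.isDivDiffB_heckeAtomSum (hGr : IsGrothFam n Gr) (hz : IsFPF z)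
    (hij : (j : ℕ) = i + 1) (h : z j < z i) (hne : z i ≠ j) :
    IsDivDiffB i j (heckeAtomSum hn Gr z)
      (heckeAtomSum hn Gr (Equiv.swap i j * z * Equiv.swap i j)) := by
  set y := Equiv.swap i j * z * Equiv.swap i j
  have hlen : fpfLen z = fpfLen y + 1 := hz.fpfLen_eq_of_gt hij h hne
  let c (v : Equiv.Perm (Fin n)) : MvPolynomial (Fin n) Rb := C (bb ^ (invLen v - fpfLen z))
  let d (v : Equiv.Perm (Fin n)) : MvPolynomial (Fin n) Rb := C (bb ^ (invLen v + 1 - fpfLen z))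
  have hasc : IsDivDiffB i j (∑ w ∈ Bfpf n hn z with w i < w j, c w * Gr w)
      (∑ w ∈ Bfpf n hn z with w i < w j, c w * (-C bb * Gr w)) :=
    .sum _ fun w hw => (isDivDiffB_of_swapVars_eq (hGr.swapVars_eq_of_lt hij
      (Finset.mem_filter.1 hw).2)).mul_left (swapVars_C _ _ _)
  have hdesc : IsDivDiffB i j (∑ w ∈ Bfpf n hn z with w j < w i, c w * Gr w)
      (∑ w ∈ Bfpf n hn z with w j < w i, d (w * Equiv.swap i j) * Gr (w * Equiv.swap i j)) := by
    refine .sum _ fun w hw => ?_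
    have hlt := (Finset.mem_filter.1 hw).2
    simp only [c, d, ← invLen_eq_of_gt hij hlt]
    exact (hGr.2 w i j hij hlt).mul_left (swapVars_C _ _ _)
  rw [sum_Bfpf_filter_gt hz hij h hne fun v => d v * Gr v] at hdesc
  have hcancel : ∑ w ∈ Bfpf n hn z with w i < w j, c w * (-C bb * Gr w) +
      ∑ w ∈ Bfpf n hn z with w i < w j, d w * Gr w = 0 := by
    rw [← Finset.sum_add_distrib]
    refine Finset.sum_eq_zero fun w hw => ?_
    have hle := fpfLen_le_invLen (Finset.mem_filter.1 hw).1
    simp only [c, d, Nat.sub_add_comm hle, pow_succ, C_mul]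
    ring
  have hatoms : ∑ w ∈ Bfpf n hn y, d w * Gr w = heckeAtomSum hn Gr y :=
    Finset.sum_congr rfl fun w _ => by simp only [d, hlen, Nat.add_sub_add_right]
  have hsplit : heckeAtomSum hn Gr z = ∑ w ∈ Bfpf n hn z with w i < w j, c w * Gr w +
      ∑ w ∈ Bfpf n hn z with w j < w i, c w * Gr w := by
    rw [heckeAtomSum, ← Finset.sum_filter_add_sum_filter_not _ fun w => w i < w j]
    have le_iff (w : Equiv.Perm (Fin n)) : w j ≤ w i ↔ w j < w i :=
      ⟨fun hle => hle.lt_of_ne (w.injective.ne (lt_of_val_eq_add_one hij).ne'), le_of_lt⟩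
    simp only [not_lt, le_iff, c]
  rw [hsplit, ← hatoms, ← zero_add (∑ w ∈ Bfpf n hn y, _), ← hcancel, add_assoc]
  exact hasc.add hdesc

end HeckeAtoms

/-! ### Symmetry of symplectic Grothendieck polynomials at matched pairs -/

section MatchedSymmetry

variable {n : ℕ} {a b c i j k l : Fin n} {f g h : MvPolynomial (Fin n) Rb}

theorem swapVars_X_of_ne_of_ne (hi : k ≠ i) (hj : k ≠ j) : swapVars i j (X k) = X k := by
  rw [swapVars_X, Equiv.swap_apply_of_ne_of_ne hi hj]

theorem swapVars_apply_swapVars (f : MvPolynomial (Fin n) Rb) :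
    swapVars i j (swapVars k l f) = rename ⇑(Equiv.swap i j * Equiv.swap k l) f := by
  rw [swapVars, swapVars, rename_rename, Equiv.Perm.coe_mul]

theorem swapVars_comm (hik : i ≠ k) (hil : i ≠ l) (hjk : j ≠ k) (hjl : j ≠ l)
    (f : MvPolynomial (Fin n) Rb) :
    swapVars i j (swapVars k l f) = swapVars k l (swapVars i j f) := by
  rw [swapVars_apply_swapVars, swapVars_apply_swapVars, swap_mul_swap_comm hik hil hjk hjl]

theorem swapVars_braid (hab : a ≠ b) (hac : a ≠ c) (hbc : b ≠ c)
    (f : MvPolynomial (Fin n) Rb) :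
    swapVars a b (swapVars b c (swapVars a b f)) =
      swapVars b c (swapVars a b (swapVars b c f)) := by
  rw [swapVars_apply_swapVars, swapVars_apply_swapVars, swapVars, swapVars, rename_rename,
    rename_rename, ← Equiv.Perm.coe_mul, ← Equiv.Perm.coe_mul,
    swap_mul_swap_mul_swap_braid hab hac hbc]

theorem IsDivDiffB.swapVars_eq_of_disjoint (hik : i ≠ k) (hil : i ≠ l) (hjk : j ≠ k)
    (hjl : j ≠ l) (hkl : k ≠ l) (hf : swapVars i j f = f) (hg : IsDivDiffB k l f g) :
    swapVars i j g = g := by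
  rw [isDivDiffB_iff] at hg
  have hswap := congrArg (swapVars i j) hg
  simp only [map_mul, map_sub, map_add, map_one, swapVars_comm hik hil hjk hjl, hf, swapVars_C,
    swapVars_X_of_ne_of_ne hik.symm hjk.symm, swapVars_X_of_ne_of_ne hil.symm hjl.symm] at hswap
  exact mul_left_cancel₀ (X_sub_X_ne_zero hkl) (hswap.trans hg.symm)

/-- If `∂_b f = -β f`, the braid relation gives `∂_a ∂_b ∂_a f = -β ∂_b ∂_a f`. -/
theorem IsDivDiffB.swapVars_eq_of_braid (hab : a ≠ b) (hac : a ≠ c) (hbc : b ≠ c)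
    (hf : swapVars b c f = f) (hg : IsDivDiffB a b f g) (hh : IsDivDiffB b c g h) :
    swapVars a b h = h := by
  have hbraid := swapVars_braid hab hac hbc f
  rw [hf] at hbraid
  rw [isDivDiffB_iff] at hg hh
  have hg' := congrArg (swapVars b c) hg
  simp only [map_mul, map_sub, map_add, map_one, swapVars_X, swapVars_C, hf,
    Equiv.swap_apply_left, Equiv.swap_apply_of_ne_of_ne hab hac] at hg'
  have hh' : (X a - X b) * (X a - X c) * (X b - X c) * h =
      (1 + C bb * X c) * (X a - X c) *
        ((1 + C bb * X b) * f - (1 + C bb * X a) * swapVars a b f) -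
      (1 + C bb * X b) * (X a - X b) *
        ((1 + C bb * X c) * f - (1 + C bb * X a) * swapVars b c (swapVars a b f)) := by
    linear_combination (X a - X b) * (X a - X c) * hh + (1 + C bb * X c) * (X a - X c) * hg
      - (1 + C bb * X b) * (X a - X b) * hg'
  have hswap := congrArg (swapVars a b) hh'
  simp only [map_mul, map_sub, map_add, map_one, swapVars_X, swapVars_C, swapVars_swapVars,
    hbraid, Equiv.swap_apply_left, Equiv.swap_apply_right,
    Equiv.swap_apply_of_ne_of_ne hac.symm hbc.symm] at hswap
  refine mul_left_cancel₀ (mul_ne_zero (mul_ne_zero (X_sub_X_ne_zero hab) (X_sub_X_ne_zero hac))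
    (X_sub_X_ne_zero hbc)) ?_
  linear_combination -hswap - hh'

theorem IsDivDiffB.swapVars_eq_of_braid' (hab : a ≠ b) (hac : a ≠ c) (hbc : b ≠ c)
    (hf : swapVars a b f = f) (hg : IsDivDiffB b c f g) (hh : IsDivDiffB a b g h) :
    swapVars b c h = h := by
  have hbraid := swapVars_braid hab hac hbc f
  rw [hf] at hbraid
  rw [isDivDiffB_iff] at hg hh
  have hg' := congrArg (swapVars a b) hg
  simp only [map_mul, map_sub, map_add, map_one, swapVars_X, swapVars_C, hf,
    Equiv.swap_apply_right, Equiv.swap_apply_of_ne_of_ne hac.symm hbc.symm] at hg'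
  have hh' : (X a - X b) * (X a - X c) * (X b - X c) * h =
      (1 + C bb * X b) * (X a - X c) *
        ((1 + C bb * X c) * f - (1 + C bb * X b) * swapVars b c f) -
      (1 + C bb * X a) * (X b - X c) *
        ((1 + C bb * X c) * f - (1 + C bb * X a) * swapVars a b (swapVars b c f)) := by
    linear_combination (X b - X c) * (X a - X c) * hh + (1 + C bb * X b) * (X a - X c) * hg
      - (1 + C bb * X a) * (X b - X c) * hg'
  have hswap := congrArg (swapVars b c) hh'
  simp only [map_mul, map_sub, map_add, map_one, swapVars_X, swapVars_C, swapVars_swapVars,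
    ← hbraid, Equiv.swap_apply_left, Equiv.swap_apply_right,
    Equiv.swap_apply_of_ne_of_ne hab hac] at hswap
  refine mul_left_cancel₀ (mul_ne_zero (mul_ne_zero (X_sub_X_ne_zero hab) (X_sub_X_ne_zero hac))
    (X_sub_X_ne_zero hbc)) ?_
  linear_combination -hswap - hh'

theorem swapVars_oplus (i j a b : Fin n) :
    swapVars i j (oplus a b) = oplus (Equiv.swap i j a) (Equiv.swap i j b) := by
  simp [oplus]

theorem swapVars_spTop (hij : (j : ℕ) = i + 1) (hrev : revPerm n i = j) :
    swapVars i j (spTop n) = spTop n := by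
  have hn : n - ((i : ℕ) + 1) = (i : ℕ) + 1 := (congrArg Fin.val hrev).trans hij
  rw [spTop, map_prod]
  refine Finset.prod_equiv (Equiv.prodCongr (Equiv.swap i j) (Equiv.swap i j)) ?_ fun p _ =>
    swapVars_oplus i j p.1 p.2
  rintro ⟨p, q⟩
  simp only [Finset.mem_filter, Finset.mem_univ, true_and, Equiv.prodCongr_apply, Prod.map_apply,
    Fin.lt_def, Equiv.swap_apply_def, Fin.ext_iff]
  split_ifs <;> omega

variable {z : Equiv.Perm (Fin n)} {G : Equiv.Perm (Fin n) → MvPolynomial (Fin n) Rb}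

theorem IsSpFam.swapVars_eq_of_matched_of_lt_right (hG : IsSpFam n G) (hz : IsFPF z)
    (hij : (j : ℕ) = i + 1) (hjl : (l : ℕ) = j + 1) (hm : z i = j) (h : z j < z l)
    (ih : ∀ y, IsFPF y → invLen z < invLen y → y j = l → swapVars j l (G y) = G y) :
    swapVars i j (G z) = G z := by
  have hne_il : i ≠ l := Fin.ne_of_val_ne (by omega)
  set y := Equiv.swap j l * z * Equiv.swap j l with hy
  have hfpf : IsFPF y := hz.swap_conj j l
  have y_i : y i = l := by
    simp [hy, hm, Equiv.swap_apply_of_ne_of_ne (lt_of_val_eq_add_one hij).ne hne_il]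
  have y_j : y j = z l := hz.swap_conj_apply_left (hz.apply_ne_of_lt hjl h)
  have z_l_ne : z l ≠ j := mt hz.apply_eq_comm.1 (by rw [hz.apply_eq_comm.1 hm]; exact hne_il)
  have hasc : y i < y j := by
    have hne := hz.2 l
    rw [hz.apply_eq_comm.1 hm] at h
    rw [y_i, y_j]
    rw [Fin.lt_def] at *
    rw [ne_eq, Fin.ext_iff] at hne z_l_ne
    omega
  refine IsDivDiffB.swapVars_eq_of_braid (lt_of_val_eq_add_one hij).ne hne_il
    (lt_of_val_eq_add_one hjl).ne (ih _ (hfpf.swap_conj i j) ?_ ?_)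
    (hG.isDivDiffB_of_lt hfpf hij hasc) (hG.isDivDiffB_of_lt hz hjl h)
  · rw [hfpf.invLen_swap_conj_of_lt hij hasc, hz.invLen_swap_conj_of_lt hjl h]
    omega
  · rw [hfpf.swap_conj_apply_right (hfpf.apply_ne_of_lt hij hasc), y_i]

theorem IsSpFam.swapVars_eq_of_matched_of_lt_left (hG : IsSpFam n G) (hz : IsFPF z)
    (hki : (i : ℕ) = k + 1) (hij : (j : ℕ) = i + 1) (hm : z i = j) (h : z k < z i)
    (ih : ∀ y, IsFPF y → invLen z < invLen y → y k = i → swapVars k i (G y) = G y) :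
    swapVars i j (G z) = G z := by
  have hne_kj : k ≠ j := Fin.ne_of_val_ne (by omega)
  set y := Equiv.swap k i * z * Equiv.swap k i with hy
  have hfpf : IsFPF y := hz.swap_conj k i
  have y_i : y i = z k := hz.swap_conj_apply_right (hz.apply_ne_of_lt hki h)
  have y_k : y k = j := by rw [hz.swap_conj_apply_left (hz.apply_ne_of_lt hki h), hm]
  have hasc : y i < y j := by
    have hne := hz.2 k
    have z_k_ne := hz.apply_ne_of_lt hki h
    rw [hm] at h
    rw [y_i, hfpf.apply_eq_comm.1 y_k]
    rw [Fin.lt_def] at *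
    rw [ne_eq, Fin.ext_iff] at hne z_k_ne
    omega
  refine IsDivDiffB.swapVars_eq_of_braid' (lt_of_val_eq_add_one hki).ne hne_kj
    (lt_of_val_eq_add_one hij).ne (ih _ (hfpf.swap_conj i j) ?_ ?_)
    (hG.isDivDiffB_of_lt hfpf hij hasc) (hG.isDivDiffB_of_lt hz hki h)
  · rw [hfpf.invLen_swap_conj_of_lt hij hasc, hz.invLen_swap_conj_of_lt hki h]
    omega
  · rw [(hfpf.swap_conj i j).apply_eq_comm,
      hfpf.swap_conj_apply_left (hfpf.apply_ne_of_lt hij hasc), hfpf.apply_eq_comm.1 y_k]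

theorem IsSpFam.swapVars_eq_of_matched (hG : IsSpFam n G) (hz : IsFPF z)
    (hij : (j : ℕ) = i + 1) (hm : z i = j) : swapVars i j (G z) = G z := by
  suffices ∀ i j : Fin n, (j : ℕ) = i + 1 → z i = j → swapVars i j (G z) = G z from this i j hij hm
  refine hz.induction_on_longer fun z hz ih i j hij hm => ?_
  by_cases hdesc : ∀ k l : Fin n, (l : ℕ) = k + 1 → z l < z k
  · obtain rfl := eq_revPerm_of_forall_gt hdesc
    rw [hG.1, swapVars_spTop hij hm]
  push Not at hdesc
  obtain ⟨k, l, hkl, hle⟩ := hdesc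
  have h := hle.lt_of_ne (z.injective.ne (lt_of_val_eq_add_one hkl).ne)
  rcases eq_or_ne k j with rfl | hkj
  · exact hG.swapVars_eq_of_matched_of_lt_right hz hij hkl hm h fun y hy hlt =>
      ih y hy hlt _ _ hkl
  rcases eq_or_ne l i with rfl | hli
  · exact hG.swapVars_eq_of_matched_of_lt_left hz hkl hij hm h fun y hy hlt =>
      ih y hy hlt _ _ hkl
  have hki : k ≠ i := by
    rintro rfl
    exact hz.apply_ne_of_lt hkl h (hm.trans (Fin.ext (hij.trans hkl.symm)))
  have hlj : l ≠ j := fun hlj => hki (Fin.ext (by rw [Fin.ext_iff] at hlj; omega))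
  refine IsDivDiffB.swapVars_eq_of_disjoint hki.symm hli.symm hkj.symm hlj.symm
    (lt_of_val_eq_add_one hkl).ne (ih _ (hz.swap_conj k l) ?_ _ _ hij ?_)
    (hG.isDivDiffB_of_lt hz hkl h)
  · rw [hz.invLen_swap_conj_of_lt hkl h]
    omega
  · rw [hz.swap_conj_apply_of_ne hki.symm hli.symm (mt hz.apply_eq_comm.1 (hm ▸ hkj.symm))
      (mt hz.apply_eq_comm.1 (hm ▸ hlj.symm)), hm]

end MatchedSymmetry

/-! ### The staircase degree bound -/

section Staircase

variable {n : ℕ} {i j : Fin n} {f g : MvPolynomial (Fin n) Rb}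

/-- The degree bounds `deg_{x_k} f ≤ n - k` for `1 ≤ k ≤ n`; in particular `x_n` does not occur
in `f`. -/
def IsStaircase (f : MvPolynomial (Fin n) Rb) : Prop :=
  ∀ k : Fin n, degreeOf k f + k + 1 ≤ n

theorem IsStaircase.degreeOf_eq_zero (hf : IsStaircase f) {k : Fin n} (hk : (k : ℕ) + 1 = n) :
    degreeOf k f = 0 := by
  have := hf k
  omega

theorem IsStaircase.sub (hf : IsStaircase f) (hg : IsStaircase g) : IsStaircase (f - g) := by
  intro k
  have hle := le_max_iff.1 (degreeOf_sub_le k f g)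
  have hfk := hf k
  have hgk := hg k
  omega

theorem IsStaircase.C_mul (hf : IsStaircase f) (c : Rb) : IsStaircase (C c * f) := by
  intro k
  have hle := degreeOf_C_mul_le f k c
  have hfk := hf k
  omega

theorem isStaircase_C (c : Rb) : IsStaircase (C c : MvPolynomial (Fin n) Rb) := by
  intro k
  rw [degreeOf_C]
  omega

theorem IsStaircase.sum {ι : Type*} {s : Finset ι} {f : ι → MvPolynomial (Fin n) Rb}
    (hf : ∀ a ∈ s, IsStaircase (f a)) : IsStaircase (∑ a ∈ s, f a) := by
  intro k
  have hle : s.sup (fun a => degreeOf k (f a)) ≤ n - 1 - k :=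
    Finset.sup_le fun a ha => by have := hf a ha k; omega
  have := (degreeOf_sum_le k s f).trans hle
  omega

theorem degreeOf_swapVars (i j k : Fin n) (f : MvPolynomial (Fin n) Rb) :
    degreeOf k (swapVars i j f) = degreeOf (Equiv.swap i j k) f := by
  simpa [swapVars] using degreeOf_rename_of_injective (p := f) (Equiv.swap i j).injective
    (Equiv.swap i j k)

theorem degreeOf_one_add_C_mul_X_mul_le (k a : Fin n) (f : MvPolynomial (Fin n) Rb) :
    degreeOf k ((1 + C bb * X a) * f) ≤ (if k = a then 1 else 0) + degreeOf k f := by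
  refine (degreeOf_mul_le _ _ _).trans (Nat.add_le_add_right ?_ _)
  refine (degreeOf_add_le _ _ _).trans (max_le ?_ ((degreeOf_C_mul_le _ _ _).trans ?_))
  · rw [degreeOf_one]
    exact Nat.zero_le _
  · rw [degreeOf_X]

theorem one_le_degreeOf_X_sub_X (h : i ≠ j) {k : Fin n} (hk : k = i ∨ k = j) :
    1 ≤ degreeOf k (X i - X j : MvPolynomial (Fin n) Rb) := by
  have hmem : Finsupp.single k 1 ∈ (X i - X j : MvPolynomial (Fin n) Rb).support := by
    rw [mem_support_iff, coeff_sub, coeff_X, coeff_X]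
    rcases hk with rfl | rfl
    · simp [Finsupp.single_left_inj, h.symm]
    · simp [Finsupp.single_left_inj, h]
  simpa using monomial_le_degreeOf k hmem

theorem IsStaircase.of_isDivDiffB (hij : (j : ℕ) = i + 1) (hf : IsStaircase f)
    (h : IsDivDiffB i j f g) : IsStaircase g := by
  intro k
  rcases eq_or_ne g 0 with rfl | hg
  · rw [degreeOf_zero]
    omega
  have hne := (lt_of_val_eq_add_one hij).ne
  have hprod := degreeOf_mul_eq (n := k) (X_sub_X_ne_zero hne) hg
  rw [isDivDiffB_iff.1 h] at hprod
  have hle := le_max_iff.1 (degreeOf_sub_le k ((1 + C bb * X j) * f)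
    ((1 + C bb * X i) * swapVars i j f))
  have hleft := degreeOf_one_add_C_mul_X_mul_le k j f
  have hright := degreeOf_one_add_C_mul_X_mul_le k i (swapVars i j f)
  rw [degreeOf_swapVars] at hright
  have hfi := hf i
  have hfj := hf j
  rcases eq_or_ne k i with rfl | hki
  · have := one_le_degreeOf_X_sub_X hne (.inl rfl)
    rw [if_neg hne] at hleft
    rw [if_pos rfl, Equiv.swap_apply_left] at hright
    omega
  rcases eq_or_ne k j with rfl | hkj
  · have := one_le_degreeOf_X_sub_X hne (.inr rfl)
    rw [if_pos rfl] at hleft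
    rw [if_neg hki, Equiv.swap_apply_right] at hright
    omega
  · have := hf k
    rw [if_neg hkj] at hleft
    rw [if_neg hki, Equiv.swap_apply_of_ne_of_ne hki hkj] at hright
    omega

theorem isStaircase_grTop (n : ℕ) : IsStaircase (grTop n) := by
  intro k
  have hle : degreeOf k (grTop n) ≤ ∑ a : Fin n, degreeOf k (X a ^ (n - 1 - (a : ℕ))) :=
    degreeOf_prod_le _ _ _
  rw [Finset.sum_eq_single k (fun a _ hak => degreeOf_X_pow_of_ne _ hak.symm)
    (by simp), degreeOf_X_self_pow] at hle
  omega

theorem degreeOf_oplus_le {a b : Fin n} (hab : a ≠ b) (k : Fin n) :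
    degreeOf k (oplus a b) ≤ if k = a ∨ k = b then 1 else 0 := by
  have hprod := (degreeOf_C_mul_le (X a * X b) k bb).trans (degreeOf_mul_le k (X a) (X b))
  refine (degreeOf_add_le _ _ _).trans
    (max_le ((degreeOf_add_le _ _ _).trans (max_le ?_ ?_)) (hprod.trans ?_)) <;>
  · simp only [degreeOf_X]
    grind

theorem isStaircase_spTop (n : ℕ) : IsStaircase (spTop n) := by
  intro k
  set s : Finset (Fin n × Fin n) := {p | p.1 < p.2 ∧ (p.1 : ℕ) + p.2 + 2 ≤ n} with hs
  have hle : degreeOf k (spTop n) ≤ (s.filter fun p => k = p.1 ∨ k = p.2).card := by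
    rw [Finset.card_filter]
    exact (degreeOf_prod_le _ _ _).trans (Finset.sum_le_sum fun p hp =>
      degreeOf_oplus_le (Finset.mem_filter.1 hp).2.1.ne k)
  have hcard : (s.filter fun p => k = p.1 ∨ k = p.2).card ≤ (Finset.range (n - 1 - k)).card := by
    refine Finset.card_le_card_of_injOn (fun p => (p.1 : ℕ) + p.2 - k) ?_ ?_
    · rintro ⟨a, b⟩ hp
      simp only [Finset.coe_filter, hs, Finset.mem_filter, Finset.mem_univ, true_and,
        Set.mem_ofPred_eq, Fin.lt_def, Fin.ext_iff] at hp
      simp only [Finset.coe_range, Set.mem_Iio]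
      omega
    · rintro ⟨a, b⟩ hp ⟨c, d⟩ hq heq
      simp only [Finset.coe_filter, hs, Finset.mem_filter, Finset.mem_univ, true_and,
        Set.mem_ofPred_eq, Fin.lt_def, Fin.ext_iff] at hp hq heq
      simp only [Prod.mk.injEq, Fin.ext_iff]
      omega
  rw [Finset.card_range] at hcard
  omega

variable {G Gr : Equiv.Perm (Fin n) → MvPolynomial (Fin n) Rb} {z : Equiv.Perm (Fin n)}

theorem IsGrothFam.isStaircase (hGr : IsGrothFam n Gr) (w : Equiv.Perm (Fin n)) :
    IsStaircase (Gr w) := by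
  induction w using induction_from_revPerm with
  | longest => exact hGr.1 ▸ isStaircase_grTop n
  | step w i j hij h ih => exact ih.of_isDivDiffB hij (hGr.isDivDiffB_of_lt hij h)

theorem IsSpFam.isStaircase (hG : IsSpFam n G) (hz : IsFPF z) : IsStaircase (G z) := by
  refine hz.induction_from_revPerm ?_ fun z i j hz hij h ih =>
    ih.of_isDivDiffB hij (hG.isDivDiffB_of_lt hz hij h)
  exact hG.1 ▸ isStaircase_spTop n

theorem IsGrothFam.isStaircase_heckeAtomSum (hGr : IsGrothFam n Gr) (hn : n % 2 = 0)
    (z : Equiv.Perm (Fin n)) : IsStaircase (heckeAtomSum hn Gr z) :=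
  .sum fun w _ => (hGr.isStaircase w).C_mul _

end Staircase

/-! ### Order of vanishing at the origin -/

section Order

variable {n d : ℕ} {i j : Fin n} {f g : MvPolynomial (Fin n) Rb}

/-- The substitution `x_k ↦ x_k t`, which records the order of vanishing at the origin as the
exponent of `t`. -/
def scaleVars (n : ℕ) :
    MvPolynomial (Fin n) Rb →ₐ[Rb] Polynomial (MvPolynomial (Fin n) Rb) :=
  aeval fun k => Polynomial.C (X k) * Polynomial.X

@[simp]
theorem scaleVars_X (k : Fin n) : scaleVars n (X k) = Polynomial.C (X k) * Polynomial.X :=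
  aeval_X _ _

theorem scaleVars_swapVars (i j : Fin n) (f : MvPolynomial (Fin n) Rb) :
    scaleVars n (swapVars i j f) = Polynomial.mapAlgHom (swapVars i j) (scaleVars n f) := by
  suffices h : (scaleVars n).comp (swapVars i j) =
      (Polynomial.mapAlgHom (swapVars i j)).comp (scaleVars n) from DFunLike.congr_fun h f
  ext1 k
  simp

theorem eval_zero_scaleVars (f : MvPolynomial (Fin n) Rb) :
    (scaleVars n f).eval 0 = C (constantCoeff f) := by
  suffices h : (Polynomial.evalRingHom 0).comp (scaleVars n).toRingHom = C.comp constantCoeff from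
    DFunLike.congr_fun h f
  ext <;> simp [scaleVars]

/-- Every monomial of `f` has degree at least `d` in the variables `x_k`. -/
def HasOrderGE (d : ℕ) (f : MvPolynomial (Fin n) Rb) : Prop :=
  Polynomial.X ^ d ∣ scaleVars n f

theorem HasOrderGE.constantCoeff_eq_zero (hf : HasOrderGE d f) (hd : 0 < d) :
    constantCoeff f = 0 := by
  rw [← C_eq_zero (σ := Fin n), ← eval_zero_scaleVars, ← Polynomial.coeff_zero_eq_eval_zero]
  exact Polynomial.X_pow_dvd_iff.1 hf 0 hd

theorem HasOrderGE.of_isDivDiffB (hij : i ≠ j) (hf : HasOrderGE (d + 1) f)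
    (h : IsDivDiffB i j f g) : HasOrderGE d g := by
  have hswap : HasOrderGE (d + 1) (swapVars i j f) := by
    rw [HasOrderGE, scaleVars_swapVars]
    simpa using map_dvd (Polynomial.mapAlgHom (swapVars i j)) hf
  have hscale := congrArg (scaleVars n) (isDivDiffB_iff.1 h)
  rw [map_mul, map_sub, map_sub, map_mul, map_mul, scaleVars_X, scaleVars_X] at hscale
  have hdvd : Polynomial.X ^ (d + 1) ∣
      Polynomial.X * (Polynomial.C (X i - X j) * scaleVars n g) := by
    have hfactor : Polynomial.X * (Polynomial.C (X i - X j) * scaleVars n g) =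
        (Polynomial.C (X i) * Polynomial.X - Polynomial.C (X j) * Polynomial.X) *
          scaleVars n g := by
      rw [Polynomial.C_sub]
      ring
    rw [hfactor, hscale]
    obtain ⟨p, hp⟩ := hf
    obtain ⟨q, hq⟩ := hswap
    exact ⟨scaleVars n (1 + C bb * X j) * p - scaleVars n (1 + C bb * X i) * q, by
      rw [hp, hq]; ring⟩
  rw [pow_succ', mul_dvd_mul_iff_left Polynomial.X_ne_zero,
    Polynomial.X_pow_dvd_iff] at hdvd
  refine Polynomial.X_pow_dvd_iff.2 fun k hk => ?_
  have hcoeff := hdvd k hk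
  rw [Polynomial.coeff_C_mul] at hcoeff
  exact (mul_eq_zero.1 hcoeff).resolve_left (X_sub_X_ne_zero hij)

theorem X_dvd_scaleVars_X (k : Fin n) : Polynomial.X ∣ scaleVars n (X k) :=
  scaleVars_X k ▸ dvd_mul_left _ _

theorem invLen_revPerm (n : ℕ) : invLen (revPerm n) = ∑ a : Fin n, (n - 1 - (a : ℕ)) := by
  simp only [← Fin.card_Ioi, ← Finset.card_sigma]
  refine Finset.card_nbij' (fun p => ⟨p.1, p.2⟩) (fun p => (p.1, p.2)) ?_ ?_ ?_ ?_ <;>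
  simp [revPerm, Set.MapsTo, Set.LeftInvOn]

theorem fpfLen_revPerm (n : ℕ) : fpfLen (revPerm n) =
    ({p | p.1 < p.2 ∧ (p.1 : ℕ) + p.2 + 2 ≤ n} : Finset (Fin n × Fin n)).card := by
  refine Finset.card_nbij' (fun p => (p.2.rev, p.1.rev)) (fun p => (p.2.rev, p.1.rev))
    ?_ ?_ (by simp [Set.LeftInvOn]) (by simp [Set.LeftInvOn]) <;>
  · rintro ⟨a, b⟩ hp
    simp only [revPerm, Equiv.coe_fn_mk, Finset.coe_filter, Finset.mem_univ, true_and,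
      Set.mem_ofPred_eq, Fin.lt_def, Fin.val_rev] at hp ⊢
    omega

theorem hasOrderGE_grTop (n : ℕ) : HasOrderGE (invLen (revPerm n)) (grTop n) := by
  rw [HasOrderGE, grTop, invLen_revPerm, map_prod, ← Finset.prod_pow_eq_pow_sum]
  refine Finset.prod_dvd_prod_of_dvd _ _ fun a _ => ?_
  rw [map_pow]
  exact pow_dvd_pow_of_dvd (X_dvd_scaleVars_X a) _

theorem hasOrderGE_spTop (n : ℕ) : HasOrderGE (fpfLen (revPerm n)) (spTop n) := by
  rw [HasOrderGE, spTop, fpfLen_revPerm, map_prod, ← Finset.prod_const]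
  refine Finset.prod_dvd_prod_of_dvd _ _ fun p _ => ?_
  rw [oplus, map_add, map_add, map_mul, map_mul]
  exact dvd_add (dvd_add (X_dvd_scaleVars_X _) (X_dvd_scaleVars_X _))
    (((X_dvd_scaleVars_X _).mul_right _).mul_left _)

variable {G Gr : Equiv.Perm (Fin n) → MvPolynomial (Fin n) Rb} {z : Equiv.Perm (Fin n)}

theorem IsGrothFam.hasOrderGE (hGr : IsGrothFam n Gr) (w : Equiv.Perm (Fin n)) :
    HasOrderGE (invLen w) (Gr w) := by
  induction w using induction_from_revPerm with
  | longest => exact hGr.1 ▸ hasOrderGE_grTop n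
  | step w i j hij h ih =>
    rw [invLen_mul_swap_of_lt hij h] at ih
    exact ih.of_isDivDiffB (lt_of_val_eq_add_one hij).ne (hGr.isDivDiffB_of_lt hij h)

theorem IsSpFam.hasOrderGE (hG : IsSpFam n G) (hz : IsFPF z) : HasOrderGE (fpfLen z) (G z) := by
  refine hz.induction_from_revPerm ?_ fun z i j hz hij h ih => ?_
  · exact hG.1 ▸ hasOrderGE_spTop n
  · rw [hz.fpfLen_swap_conj_of_lt hij h] at ih
    exact ih.of_isDivDiffB (lt_of_val_eq_add_one hij).ne (hG.isDivDiffB_of_lt hz hij h)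

theorem IsGrothFam.constantCoeff_heckeAtomSum (hGr : IsGrothFam n Gr) (hn : n % 2 = 0)
    (h : 0 < fpfLen z) : constantCoeff (heckeAtomSum hn Gr z) = 0 := by
  rw [heckeAtomSum, map_sum]
  refine Finset.sum_eq_zero fun w hw => ?_
  rw [map_mul, (hGr.hasOrderGE w).constantCoeff_eq_zero (h.trans_le (fpfLen_le_invLen hw)),
    mul_zero]

end Order

/-! ### Vanishing of almost symmetric polynomials -/

section Uniqueness

variable {n : ℕ} {i j : Fin n}

theorem forall_of_swap_of_update_last {R : Type*} [Zero R] {P : (Fin n → R) → Prop} (zero : P 0)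
    (swap : ∀ (i j : Fin n) (v : Fin n → R), (j : ℕ) = i + 1 → P v → P (v ∘ Equiv.swap i j))
    (update_last : ∀ (k : Fin n) (v : Fin n → R) (a : R), (k : ℕ) + 1 = n → P v →
      P (Function.update v k a)) (v : Fin n → R) : P v := by
  have update (d : ℕ) (k : Fin n) (hk : (k : ℕ) + 1 + d = n) (v : Fin n → R) (a : R)
      (hv : P v) : P (Function.update v k a) := by
    induction d generalizing k v with
    | zero => exact update_last k v a hk hv
    | succ d ih =>
      obtain ⟨l, hl⟩ : ∃ l : Fin n, (l : ℕ) = k + 1 := ⟨⟨k + 1, by omega⟩, rfl⟩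
      have hupdate := swap k l _ hl (ih l (by omega) _ (swap k l v hl hv))
      rwa [Function.update_comp_equiv, Function.comp_assoc, ← Equiv.Perm.coe_mul,
        Equiv.swap_mul_self, Equiv.symm_swap, Equiv.swap_apply_right] at hupdate
  have piecewise (s : Finset (Fin n)) : P (s.piecewise v 0) := by
    induction s using Finset.induction_on with
    | empty => simpa using zero
    | insert k s _ ih =>
      rw [Finset.piecewise_insert]
      exact update (n - 1 - k) k (by omega) _ _ ih
  simpa using piecewise Finset.univ

theorem one_add_bb_mul_ne_zero (c : Rb) : 1 + bb * c ≠ 0 := by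
  intro h
  simpa [bb] using congrArg Polynomial.constantCoeff h

/-- The zeros of `f` in `ℤ[β]^n` are stable under adjacent transpositions, because `1 + β c ≠ 0`
for `c ∈ ℤ[β]`, and under changes of the last coordinate; these moves reach every point from the
origin. -/
theorem eq_zero_of_swapVars_eq_or_isDivDiffB_zero {f : MvPolynomial (Fin n) Rb}
    (hf : IsStaircase f) (hconst : constantCoeff f = 0)
    (h : ∀ i j : Fin n, (j : ℕ) = i + 1 → swapVars i j f = f ∨ IsDivDiffB i j f 0) : f = 0 := by
  refine MvPolynomial.funext fun v => ?_
  rw [map_zero]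
  induction v using forall_of_swap_of_update_last with
  | zero => rwa [eval_zero]
  | swap i j v hij hv =>
    rw [← eval_rename]
    change eval v (swapVars i j f) = 0
    rcases h i j hij with hsymm | hdiv
    · rw [hsymm, hv]
    · have heval := congrArg (eval v) (isDivDiffB_iff.1 hdiv)
      simpa [hv, one_add_bb_mul_ne_zero] using heval
  | update_last k v a hk hv =>
    rw [← hv]
    refine eval₂Hom_congr' rfl (fun l hl _ => ?_) rfl
    rw [mem_vars_iff_degreeOf_ne_zero] at hl
    have hlk : l ≠ k := by
      rintro rfl
      exact hl (hf.degreeOf_eq_zero hk)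
    exact Function.update_of_ne hlk _ _

theorem eq_C_of_swapVars_eq {f : MvPolynomial (Fin n) Rb} (hf : IsStaircase f)
    (h : ∀ i j : Fin n, (j : ℕ) = i + 1 → swapVars i j f = f) : f = C (constantCoeff f) := by
  refine sub_eq_zero.1 (eq_zero_of_swapVars_eq_or_isDivDiffB_zero (hf.sub (isStaircase_C _))
    (by simp) fun i j hij => .inl ?_)
  rw [map_sub, h i j hij, swapVars_C]

end Uniqueness

/-! ### Evaluation at `-1/β` -/

section Evaluation

variable {n : ℕ} {i j : Fin n} {f g : MvPolynomial (Fin n) Rb}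

/-- The point `-1/β` of the fraction field `ℚ(β)` of `ℤ[β]`. -/
def negInvBb : FractionRing Rb :=
  -(algebraMap Rb (FractionRing Rb) bb)⁻¹

theorem bb_mul_negInvBb : algebraMap Rb (FractionRing Rb) bb * negInvBb = -1 := by
  have hbb : algebraMap Rb (FractionRing Rb) bb ≠ 0 := by
    simp [bb]
  rw [negInvBb, mul_neg, mul_inv_cancel₀ hbb]

/-- The evaluation of all variables at `-1/β`. -/
def evalNegInv (n : ℕ) : MvPolynomial (Fin n) Rb →ₐ[Rb] FractionRing Rb :=
  aeval fun _ => negInvBb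

/-- Setting every variable except `x_i` to `-1/β` turns the equation defining `∂_i^{(β)} f = g`
into `(x_i + 1/β) g = -β (x_i + 1/β) (s_i f)`. -/
theorem IsDivDiffB.evalNegInv_eq (hij : i ≠ j) (h : IsDivDiffB i j f g) :
    evalNegInv n g = -algebraMap Rb (FractionRing Rb) bb * evalNegInv n f := by
  let b : FractionRing Rb := algebraMap Rb (FractionRing Rb) bb
  let ψ : MvPolynomial (Fin n) Rb →ₐ[Rb] Polynomial (FractionRing Rb) :=
    aeval (Function.update (fun _ => Polynomial.C negInvBb) i Polynomial.X)
  have eval_ψ (p : MvPolynomial (Fin n) Rb) : (ψ p).eval negInvBb = evalNegInv n p := by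
    suffices h : (Polynomial.evalRingHom negInvBb).comp ψ.toRingHom = (evalNegInv n).toRingHom from
      DFunLike.congr_fun h p
    refine ringHom_ext (fun c => by simp [ψ, evalNegInv]) fun k => ?_
    rcases eq_or_ne k i with rfl | hk <;> simp [ψ, evalNegInv, *]
  have eval_swapVars : evalNegInv n (swapVars i j f) = evalNegInv n f := aeval_rename _ _ _
  have ψ_C : ψ (C bb) = Polynomial.C b := ψ.commutes bb
  have ψ_i : ψ (X i) = Polynomial.X := by simp [ψ]
  have ψ_j : ψ (X j) = Polynomial.C negInvBb := by simp [ψ, hij.symm]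
  have hψ := congrArg ψ (isDivDiffB_iff.1 h)
  simp only [map_mul, map_sub, map_add, map_one, ψ_C, ψ_i, ψ_j] at hψ
  have hb : Polynomial.C b * Polynomial.C negInvBb = -1 := by
    rw [← Polynomial.C_mul, bb_mul_negInvBb, Polynomial.C_neg, Polynomial.C_1]
  have hcancel : ψ g = -Polynomial.C b * ψ (swapVars i j f) := by
    refine mul_left_cancel₀ (Polynomial.X_sub_C_ne_zero negInvBb) ?_
    linear_combination hψ + (ψ f - ψ (swapVars i j f)) * hb
  rw [← eval_ψ, hcancel]
  simp [eval_ψ, eval_swapVars, b]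

theorem evalNegInv_X (k : Fin n) : evalNegInv n (X k) = negInvBb :=
  aeval_X _ _

theorem evalNegInv_oplus (i j : Fin n) : evalNegInv n (oplus i j) = negInvBb := by
  rw [oplus, map_add, map_add, map_mul, map_mul, evalNegInv_X, evalNegInv_X]
  have hC : evalNegInv n (C bb) = algebraMap Rb (FractionRing Rb) bb := (evalNegInv n).commutes bb
  linear_combination negInvBb * bb_mul_negInvBb + negInvBb * hC * negInvBb

variable {G Gr : Equiv.Perm (Fin n) → MvPolynomial (Fin n) Rb} {z : Equiv.Perm (Fin n)}

theorem IsGrothFam.evalNegInv_eq (hGr : IsGrothFam n Gr) (w : Equiv.Perm (Fin n)) :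
    evalNegInv n (Gr w) = negInvBb ^ invLen w := by
  induction w using induction_from_revPerm with
  | longest =>
    rw [hGr.1, grTop, map_prod, invLen_revPerm, ← Finset.prod_pow_eq_pow_sum]
    exact Finset.prod_congr rfl fun k _ => by rw [map_pow, evalNegInv_X]
  | step w i j hij h ih =>
    rw [(hGr.isDivDiffB_of_lt hij h).evalNegInv_eq (lt_of_val_eq_add_one hij).ne, ih,
      invLen_mul_swap_of_lt hij h]
    linear_combination -negInvBb ^ invLen w * bb_mul_negInvBb

theorem IsSpFam.evalNegInv_eq (hG : IsSpFam n G) (hz : IsFPF z) :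
    evalNegInv n (G z) = negInvBb ^ fpfLen z := by
  refine hz.induction_from_revPerm ?_ fun z i j hz hij h ih => ?_
  · rw [hG.1, spTop, map_prod, fpfLen_revPerm]
    exact Finset.prod_eq_pow_card fun p _ => evalNegInv_oplus p.1 p.2
  · rw [(hG.isDivDiffB_of_lt hz hij h).evalNegInv_eq (lt_of_val_eq_add_one hij).ne, ih,
      hz.fpfLen_swap_conj_of_lt hij h]
    linear_combination -negInvBb ^ fpfLen z * bb_mul_negInvBb

end Evaluation

/-! ### The expansion into Grothendieck polynomials -/

section Expansion

variable {n : ℕ} {G Gr : Equiv.Perm (Fin n) → MvPolynomial (Fin n) Rb}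
  {z : Equiv.Perm (Fin n)}

theorem IsSpFam.swapVars_sub_heckeAtomSum (hG : IsSpFam n G) (hGr : IsGrothFam n Gr)
    (hn : n % 2 = 0) (hz : IsFPF z) {i j : Fin n} (hij : (j : ℕ) = i + 1)
    (h : z i < z j ∨ z i = j) :
    swapVars i j (G z - heckeAtomSum hn Gr z) = G z - heckeAtomSum hn Gr z := by
  rw [map_sub, hGr.swapVars_heckeAtomSum hij h]
  rcases h with hlt | hmatched
  · rw [hG.swapVars_eq_of_lt hz hij hlt]
  · rw [hG.swapVars_eq_of_matched hz hij hmatched]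

theorem IsSpFam.eq_heckeAtomSum_theta (hG : IsSpFam n G) (hGr : IsGrothFam n Gr)
    (hn : n % 2 = 0) : G (theta n hn) = heckeAtomSum hn Gr (theta n hn) := by
  have hΘ := isFPF_theta hn
  set D := G (theta n hn) - heckeAtomSum hn Gr (theta n hn) with hD
  have hconst : D = C (constantCoeff D) :=
    eq_C_of_swapVars_eq ((hG.isStaircase hΘ).sub (hGr.isStaircase_heckeAtomSum hn _))
      fun i j hij => hG.swapVars_sub_heckeAtomSum hGr hn hΘ hij (theta_lt_or_apply_eq hn hij)
  have heval : evalNegInv n D = 0 := by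
    rw [hD, map_sub, heckeAtomSum_theta, hG.evalNegInv_eq hΘ, hGr.evalNegInv_eq, fpfLen_theta,
      invLen_one, sub_self]
  rw [hconst] at heval
  have hcoeff : algebraMap Rb (FractionRing Rb) (constantCoeff D) = 0 :=
    ((evalNegInv n).commutes _).symm.trans heval
  rw [IsFractionRing.to_map_eq_zero_iff] at hcoeff
  rw [← sub_eq_zero, ← hD, hconst, hcoeff, C_0]

theorem IsSpFam.eq_heckeAtomSum (hG : IsSpFam n G) (hGr : IsGrothFam n Gr) (hn : n % 2 = 0)
    (hz : IsFPF z) : G z = heckeAtomSum hn Gr z := by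
  refine hz.induction_on_descents fun z hz ih => ?_
  by_cases hmin : ∀ i j : Fin n, (j : ℕ) = i + 1 → z i < z j ∨ z i = j
  · rw [hz.eq_theta hn hmin, hG.eq_heckeAtomSum_theta hGr]
  have hpos : 0 < fpfLen z := by
    push Not at hmin
    obtain ⟨i, j, hij, hle, hne⟩ := hmin
    have hlt := hle.lt_of_ne (z.injective.ne (lt_of_val_eq_add_one hij).ne')
    rw [hz.fpfLen_eq_of_gt hij hlt hne]
    exact Nat.succ_pos _
  refine sub_eq_zero.1 (eq_zero_of_swapVars_eq_or_isDivDiffB_zero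
    ((hG.isStaircase hz).sub (hGr.isStaircase_heckeAtomSum hn z)) ?_ fun i j hij => ?_)
  · rw [map_sub, (hG.hasOrderGE hz).constantCoeff_eq_zero hpos,
      hGr.constantCoeff_heckeAtomSum hn hpos, sub_zero]
  by_cases hsymm : z i < z j ∨ z i = j
  · exact .inl (hG.swapVars_sub_heckeAtomSum hGr hn hz hij hsymm)
  · right
    rw [not_or, not_lt] at hsymm
    have hlt := hsymm.1.lt_of_ne (z.injective.ne (lt_of_val_eq_add_one hij).ne')
    have hdiff := (hG.isDivDiffB_of_gt hz hij hlt hsymm.2).sub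
      (hGr.isDivDiffB_heckeAtomSum (hn := hn) hz hij hlt hsymm.2)
    rwa [ih i j hij hlt hsymm.2, sub_self] at hdiff

end Expansion

theorem statement9 (n : ℕ) (hpos : 0 < n) (hev : n % 2 = 0)
    (z : Equiv.Perm (Fin n)) (hz : IsFPF z) (m : ℕ)
    (G : Equiv.Perm (Fin (2 * m + n)) → MvPolynomial (Fin (2 * m + n)) Rb)
    (hG : IsSpFam (2 * m + n) G)
    (Gr : Equiv.Perm (Fin (2 * m + n)) → MvPolynomial (Fin (2 * m + n)) Rb)
    (hGr : IsGrothFam (2 * m + n) Gr) :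
    G (extPerm (theta (2 * m) (by omega)) z) =
      ∑ w ∈ Bfpf n hev z, C (bb ^ (invLen w - fpfLen z)) *
        Gr (extPerm (1 : Equiv.Perm (Fin (2 * m))) w) := by
  have h2m : (2 * m) % 2 = 0 := by omega
  have hN : (2 * m + n) % 2 = 0 := by omega
  rw [hG.eq_heckeAtomSum hGr hN ((isFPF_theta h2m).extPerm hz), heckeAtomSum,
    sum_Bfpf_extPerm_theta h2m hev hN]
  refine Finset.sum_congr rfl fun w _ => ?_
  rw [invLen_extPerm_one, fpfLen_extPerm_theta h2m hev hz]

end
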